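/- arXiv:1503.03111 — 5 statements merged into one kernel-verified Lean document; each statement's English description precedes it below -/
import Mathlib

section
/- Let d ≥ 1 and let K be a convex body in ℝ^d. Then the covering index of the cube satisfies coin([0,1]^d) = 2^{d+1}, and every convex body K ⊆ ℝ^d satisfies coin(K) ≥ 2^{d+1}; thus affine d-cubes minimize the covering index among all d-dimensional convex bodies. -/
open Set Pointwise

section Defs

variable {V : Type*} [NormedAddCommGroup V] [NormedSpace ℝ V]

/-- A convex body: compact, convex, with nonempty interior. -/
def IsConvexBody (K : Set V) : Prop :=
  IsCompact K ∧ Convex ℝ K ∧ (interior K).Nonempty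

/-- `K` can be covered by `m` homothets of ratio `lam`. -/
def CoversWith (K : Set V) (lam : ℝ) (m : ℕ) : Prop :=
  ∃ t : Fin m → V, K ⊆ ⋃ i, (fun x => lam • x + t i) '' K

/-- The `m`-covering number `γ_m(K)`. -/
noncomputable def gammaC (m : ℕ) (K : Set V) : ℝ :=
  sInf {lam : ℝ | 0 < lam ∧ CoversWith K lam m}

/-- The covering index `coin(K)`. -/
noncomputable def coin (K : Set V) : ℝ :=
  sInf {r : ℝ | ∃ m : ℕ, 0 < m ∧ gammaC m K ≤ 1 / 2 ∧ r = (m : ℝ) / (1 - gammaC m K)}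

/-- The weak covering index `wcoin(K)`. -/
noncomputable def wcoin (K : Set V) : ℝ :=
  sInf {r : ℝ | ∃ m : ℕ, 0 < m ∧ gammaC m K < 1 ∧ r = (m : ℝ) / (1 - gammaC m K)}

/-- `N_λ(K)`: the least number of translates of `λ • K` needed to cover `K`. -/
noncomputable def covN (lam : ℝ) (K : Set V) : ℕ :=
  sInf {n : ℕ | CoversWith K lam n}

/-- A convex body is tightly covered if for every `0 < λ < 1` it contains `N_λ(K)`
points no two of which lie in a common homothet `λ • K + t`. -/
def TightlyCovered (K : Set V) : Prop :=
  ∀ lam : ℝ, 0 < lam → lam < 1 →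
    ∃ p : Fin (covN lam K) → V, (∀ i, p i ∈ K) ∧
      ∀ i j, i ≠ j → ∀ t : V,
        ¬(p i ∈ (fun x => lam • x + t) '' K ∧ p j ∈ (fun x => lam • x + t) '' K)

/-- The covering parameter `C(K)` of Swanepoel. -/
noncomputable def covParam (K : Set V) : ℝ :=
  sInf {r : ℝ | ∃ k : ℕ, ∃ lam : Fin k → ℝ, ∃ t : Fin k → V,
    (∀ i, 0 < lam i ∧ lam i < 1) ∧
    (K ⊆ ⋃ i, (fun x => lam i • x + t i) '' K) ∧
    r = ∑ i, 1 / (1 - lam i)}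

/-- The (multiplicative) Banach–Mazur distance. -/
noncomputable def distBM {d : ℕ} (K L : Set (Fin d → ℝ)) : ℝ :=
  sInf {δ : ℝ | 1 ≤ δ ∧ ∃ T : (Fin d → ℝ) ≃ₗ[ℝ] (Fin d → ℝ), ∃ a ∈ K, ∃ b ∈ L,
    (fun x => x - b) '' L ⊆ T '' ((fun x => x - a) '' K) ∧
    T '' ((fun x => x - a) '' K) ⊆ δ • ((fun x => x - b) '' L)}

end Defs

open MeasureTheory in
theorem aux_vol {d : ℕ} {K : Set (Fin d → ℝ)} (hK : IsConvexBody K) {lam : ℝ} (hl : 0 < lam)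
    {m : ℕ} (h : CoversWith K lam m) : 1 ≤ (m : ℝ) * lam ^ d := by
  obtain ⟨t, ht⟩ := h
  have hfin : volume K ≠ ⊤ := hK.1.measure_lt_top.ne
  have hpos : volume K ≠ 0 := (Measure.measure_pos_of_nonempty_interior _ hK.2.2).ne'
  have hi : ∀ i, volume ((fun x => lam • x + t i) '' K) = ENNReal.ofReal (lam ^ d) * volume K := by
    intro i
    have : (fun x => lam • x + t i) '' K = (fun x => x + t i) '' (lam • K) := by
      rw [← Set.image_smul, Set.image_image]
    rw [this, Set.image_add_right, measure_preimage_add_right, Measure.addHaar_smul]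
    simp [abs_of_pos hl]
  have h1 : volume K ≤ ENNReal.ofReal (m * lam ^ d) * volume K := by
    calc volume K ≤ volume (⋃ i, (fun x => lam • x + t i) '' K) := measure_mono ht
      _ ≤ ∑ i, volume ((fun x => lam • x + t i) '' K) := measure_iUnion_fintype_le _ _
      _ = _ := by
        simp only [hi, Finset.sum_const, Finset.card_univ, Fintype.card_fin, nsmul_eq_mul]
        rw [ENNReal.ofReal_mul (by positivity), ENNReal.ofReal_natCast, mul_assoc]
  have h2 : (1 : ENNReal) ≤ ENNReal.ofReal (m * lam ^ d) := by
    by_contra hc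
    push Not at hc
    have := ENNReal.mul_lt_mul_left hpos hfin hc
    rw [one_mul] at this
    exact absurd h1 (not_le.mpr this)
  rwa [ENNReal.one_le_ofReal] at h2

theorem aux_one {d : ℕ} (K : Set (Fin d → ℝ)) {m : ℕ} (hm : 0 < m) : CoversWith K 1 m :=
  ⟨fun _ => 0, fun x hx => Set.mem_iUnion.2 ⟨⟨0, hm⟩, x, hx, by simp⟩⟩

theorem aux_gamma {d : ℕ} {K : Set (Fin d → ℝ)} (hK : IsConvexBody K) {m : ℕ} (hm : 0 < m) :
    0 ≤ gammaC m K ∧ 1 ≤ (m : ℝ) * gammaC m K ^ d := by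
  have hb : BddBelow {lam : ℝ | 0 < lam ∧ CoversWith K lam m} := ⟨0, fun x hx => hx.1.le⟩
  have hn : {lam : ℝ | 0 < lam ∧ CoversWith K lam m}.Nonempty := ⟨1, one_pos, aux_one K hm⟩
  refine ⟨le_csInf hn fun x hx => hx.1.le, ?_⟩
  have hc := csInf_mem_closure hn hb
  have hcl : IsClosed {x : ℝ | 1 ≤ (m : ℝ) * x ^ d} :=
    isClosed_le continuous_const (by fun_prop)
  exact closure_minimal (fun x hx => aux_vol hK hx.1 hx.2) hcl hc

theorem aux_gamma_le {d : ℕ} {K : Set (Fin d → ℝ)} {m : ℕ} {lam : ℝ} (hl : 0 < lam)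
    (h : CoversWith K lam m) : gammaC m K ≤ lam :=
  csInf_le ⟨0, fun x hx => hx.1.le⟩ ⟨hl, h⟩

theorem aux_lower {d : ℕ} (hd : 1 ≤ d) {K : Set (Fin d → ℝ)} (hK : IsConvexBody K) {m : ℕ}
    (hm : 0 < m) (hg : gammaC m K ≤ 1 / 2) :
    (2 : ℝ) ^ (d + 1) ≤ (m : ℝ) / (1 - gammaC m K) := by
  obtain ⟨h0, h1⟩ := aux_gamma hK hm
  generalize gammaC m K = g at *
  obtain ⟨e, rfl⟩ : ∃ e, d = e + 1 := ⟨d - 1, by omega⟩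
  rw [le_div_iff₀ (by linarith)]
  have h2 : (2 * g) ^ e ≤ 1 := pow_le_one₀ (by linarith) (by linarith)
  have h3 : 4 * (g * (1 - g)) ≤ 1 := by nlinarith [sq_nonneg (2 * g - 1)]
  have h4 : (2 * g) ^ e * (4 * (g * (1 - g))) ≤ 1 :=
    mul_le_one₀ h2 (by nlinarith) h3
  have h5 : (2 : ℝ) ^ (e + 1 + 1) * (1 - g) * 1 ≤
      (2 : ℝ) ^ (e + 1 + 1) * (1 - g) * (m * g ^ (e + 1)) :=
    mul_le_mul_of_nonneg_left h1 (mul_nonneg (by positivity) (by linarith))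
  have h6 : (2 : ℝ) ^ (e + 1 + 1) * (1 - g) * (m * g ^ (e + 1)) =
      m * ((2 * g) ^ e * (4 * (g * (1 - g)))) := by
    rw [mul_pow]; ring
  have h7 : (m : ℝ) * ((2 * g) ^ e * (4 * (g * (1 - g)))) ≤ m * 1 :=
    mul_le_mul_of_nonneg_left h4 (by positivity)
  linarith

theorem aux_exists {d : ℕ} {K : Set (Fin d → ℝ)} (hK : IsConvexBody K) :
    ∃ m : ℕ, 0 < m ∧ CoversWith K (1 / 2) m := by
  obtain ⟨p, hp⟩ := hK.2.2
  have hopen : IsOpen ((1 / 2 : ℝ) • interior K) := isOpen_interior.smul₀ (by norm_num)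
  obtain ⟨s, hs⟩ := hK.1.elim_finite_subcover
    (fun x : Fin d → ℝ => (fun y => y + x) ⁻¹' ((1 / 2 : ℝ) • interior K))
    (fun x => hopen.preimage (by fun_prop))
    (fun y _ => Set.mem_iUnion.2 ⟨(1 / 2 : ℝ) • p - y, by
      simpa using Set.smul_mem_smul_set (a := (1 / 2 : ℝ)) hp⟩)
  refine ⟨s.card, ?_, fun i => -(s.equivFin.symm i : Fin d → ℝ), ?_⟩
  · rw [Finset.card_pos]
    have := hs (interior_subset hp)
    simp only [Set.mem_iUnion] at this
    obtain ⟨x, hx, _⟩ := this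
    exact ⟨x, hx⟩
  · intro y hy
    have := hs hy
    simp only [Set.mem_iUnion] at this
    obtain ⟨x, hx, z, hz, hzy⟩ := this
    refine Set.mem_iUnion.2 ⟨s.equivFin ⟨x, hx⟩, z, interior_subset hz, ?_⟩
    simp only at hzy
    simp only [Equiv.symm_apply_apply, hzy]
    abel

theorem aux_cube_body (d : ℕ) : IsConvexBody (Set.Icc (0 : Fin d → ℝ) 1) := by
  refine ⟨isCompact_Icc, convex_Icc _ _, fun _ => 1 / 2, ?_⟩
  rw [← Set.pi_univ_Icc, interior_pi_set Set.finite_univ]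
  intro i _
  simp only [Pi.zero_apply, Pi.one_apply, interior_Icc, Set.mem_Ioo]
  norm_num

theorem aux_cube_cover (d : ℕ) : CoversWith (Set.Icc (0 : Fin d → ℝ) 1) (1 / 2) (2 ^ d) := by
  classical
  have e : (Fin d → Bool) ≃ Fin (2 ^ d) := Fintype.equivFinOfCardEq (by simp)
  refine ⟨fun i j => if e.symm i j then 1 / 2 else 0, fun x hx => ?_⟩
  refine Set.mem_iUnion.2 ⟨e fun j => decide (1 / 2 ≤ x j),
    fun j => if 1 / 2 ≤ x j then 2 * x j - 1 else 2 * x j, ⟨fun j => ?_, fun j => ?_⟩, ?_⟩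
  · have := hx.1 j
    simp only [Pi.zero_apply] at *
    split_ifs <;> linarith
  · have := hx.2 j
    simp only [Pi.one_apply] at *
    split_ifs <;> linarith
  · funext j
    by_cases h : 1 / 2 ≤ x j
    · simp only [Equiv.symm_apply_apply, Pi.add_apply, Pi.smul_apply, smul_eq_mul, h, decide_true, if_true]
      ring
    · simp only [Equiv.symm_apply_apply, Pi.add_apply, Pi.smul_apply, smul_eq_mul, h, decide_false, if_false]
      simp

/-- affine `d`-cubes minimize the covering index. -/
theorem coin_cube_min (d : ℕ) (hd : 1 ≤ d) :
    coin (Set.Icc (0 : Fin d → ℝ) 1) = 2 ^ (d + 1) ∧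
    ∀ K : Set (Fin d → ℝ), IsConvexBody K → (2 : ℝ) ^ (d + 1) ≤ coin K := by
  have hlow : ∀ K : Set (Fin d → ℝ), IsConvexBody K → (2 : ℝ) ^ (d + 1) ≤ coin K := by
    intro K hK
    obtain ⟨m, hm, hc⟩ := aux_exists hK
    refine le_csInf ⟨_, m, hm, aux_gamma_le (by norm_num) hc, rfl⟩ ?_
    rintro r ⟨n, hn, hg, rfl⟩
    exact aux_lower hd hK hn hg
  refine ⟨le_antisymm ?_ (hlow _ (aux_cube_body d)), hlow⟩
  have hg : gammaC (2 ^ d) (Set.Icc (0 : Fin d → ℝ) 1) ≤ 1 / 2 :=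
    aux_gamma_le (by norm_num) (aux_cube_cover d)
  have hmem : ((2 ^ d : ℕ) : ℝ) / (1 - gammaC (2 ^ d) (Set.Icc (0 : Fin d → ℝ) 1)) ∈
      {r : ℝ | ∃ m : ℕ, 0 < m ∧ gammaC m (Set.Icc (0 : Fin d → ℝ) 1) ≤ 1 / 2 ∧
        r = (m : ℝ) / (1 - gammaC m (Set.Icc (0 : Fin d → ℝ) 1))} :=
    ⟨2 ^ d, by positivity, hg, rfl⟩
  refine (csInf_le ⟨2 ^ (d + 1), ?_⟩ hmem).trans ?_
  · rintro r ⟨n, hn, hg, rfl⟩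
    exact aux_lower hd (aux_cube_body d) hn hg
  · rw [div_le_iff₀ (by linarith)]
    push_cast
    have : (0 : ℝ) < 2 ^ d := by positivity
    rw [pow_succ]
    nlinarith
end

section
/- Let B² denote the closed unit disk in ℝ². Then coin(B²) = 14, and every convex body K ⊆ ℝ² satisfies coin(K) ≤ 14; thus the circular disk maximizes the covering index among planar convex bodies. -/
open Set Pointwise

structure HexIn (S : Set (ℝ × ℝ)) : Prop where
  conv : Convex ℝ S
  h0 : ((1:ℝ), (0:ℝ)) ∈ S
  h1 : ((0:ℝ), (1:ℝ)) ∈ S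
  h2 : ((-1:ℝ), (1:ℝ)) ∈ S
  h3 : ((-1:ℝ), (0:ℝ)) ∈ S
  h4 : ((0:ℝ), (-1:ℝ)) ∈ S
  h5 : ((1:ℝ), (-1:ℝ)) ∈ S

def HexMax (S : Set (ℝ × ℝ)) : Prop :=
  ∀ a b e h d L : ℝ, 0 ≤ L → (a, h) ∈ S → (a + 2 * L, h) ∈ S → (b, h + d) ∈ S →
    (b + L, h + d) ∈ S → (e, h - d) ∈ S → (e + L, h - d) ∈ S → L * d ≤ 1

lemma mem_comb {S : Set (ℝ × ℝ)} (hS : Convex ℝ S) {a b c d x y l : ℝ}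
    (h1 : (a, b) ∈ S) (h2 : (c, d) ∈ S) (h0 : 0 ≤ l) (hl : l ≤ 1)
    (hx : x = (1 - l) * a + l * c) (hy : y = (1 - l) * b + l * d) : (x, y) ∈ S := by
  have := hS h1 h2 (a := 1 - l) (b := l) (by linarith) h0 (by ring)
  rw [hx, hy]
  simpa using this

lemma hseg {S : Set (ℝ × ℝ)} (hS : Convex ℝ S) {a b t x : ℝ}
    (h1 : (a, t) ∈ S) (h2 : (b, t) ∈ S) (ha : a ≤ x) (hb : x ≤ b) : (x, t) ∈ S := by
  rcases eq_or_lt_of_le (ha.trans hb) with h | h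
  · have : x = a := by linarith
    rwa [this]
  · refine mem_comb hS h1 h2 (l := (x - a) / (b - a)) (div_nonneg (by linarith) (by linarith))
      ((div_le_one (by linarith)).2 (by linarith)) ?_ ?_
    · have : b - a ≠ 0 := by linarith
      field_simp; ring
    · ring

lemma vseg {S : Set (ℝ × ℝ)} (hS : Convex ℝ S) {a b t x : ℝ}
    (h1 : (t, a) ∈ S) (h2 : (t, b) ∈ S) (ha : a ≤ x) (hb : x ≤ b) : (t, x) ∈ S := by
  rcases eq_or_lt_of_le (ha.trans hb) with h | h
  · have : x = a := by linarith
    rwa [this]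
  · refine mem_comb hS h1 h2 (l := (x - a) / (b - a)) (div_nonneg (by linarith) (by linarith))
      ((div_le_one (by linarith)).2 (by linarith)) ?_ ?_
    · ring
    · have : b - a ≠ 0 := by linarith
      field_simp; ring

lemma HexIn.neg {S : Set (ℝ × ℝ)} (H : HexIn S) : HexIn {x | (-x.1, -x.2) ∈ S} where
  conv := by
    intro x hx y hy a b ha hb hab
    have := H.conv hx hy ha hb hab
    simp only [mem_ofPred_eq] at *
    convert this using 1
    ext <;> simp <;> ring
  h0 := by simpa using H.h3
  h1 := by simpa using H.h4
  h2 := by simpa using H.h5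
  h3 := by simpa using H.h0
  h4 := by simpa using H.h1
  h5 := by simpa using H.h2

lemma HexIn.mir {S : Set (ℝ × ℝ)} (H : HexIn S) : HexIn {x | (-x.1 - x.2, x.2) ∈ S} where
  conv := by
    intro x hx y hy a b ha hb hab
    have := H.conv hx hy ha hb hab
    simp only [mem_ofPred_eq] at *
    convert this using 1
    ext <;> simp <;> ring
  h0 := by simpa using H.h3
  h1 := by simpa using H.h2
  h2 := by simpa using H.h1
  h3 := by simpa using H.h0
  h4 := by simpa using H.h5
  h5 := by simpa using H.h4

lemma HexIn.rot {S : Set (ℝ × ℝ)} (H : HexIn S) : HexIn {x | (-x.2, x.1 + x.2) ∈ S} where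
  conv := by
    intro x hx y hy a b ha hb hab
    have := H.conv hx hy ha hb hab
    simp only [mem_ofPred_eq] at *
    convert this using 1
    ext <;> simp <;> ring
  h0 := by simpa using H.h1
  h1 := by simpa using H.h2
  h2 := by simpa using H.h3
  h3 := by simpa using H.h4
  h4 := by simpa using H.h5
  h5 := by simpa using H.h0

lemma HexMax.neg {S : Set (ℝ × ℝ)} (H : HexMax S) : HexMax {x | (-x.1, -x.2) ∈ S} := by
  intro a b e h d L hL h1 h2 h3 h4 h5 h6
  simp only [mem_ofPred_eq] at *
  refine H (-(a + 2 * L)) (-(e + L)) (-(b + L)) (-h) d L hL h2 ?_ ?_ ?_ ?_ ?_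
  · convert h1 using 2; ring
  · convert h6 using 2; ring
  · convert h5 using 2 <;> ring
  · convert h4 using 2; ring
  · convert h3 using 2 <;> ring

lemma HexMax.mir {S : Set (ℝ × ℝ)} (H : HexMax S) : HexMax {x | (-x.1 - x.2, x.2) ∈ S} := by
  intro a b e h d L hL h1 h2 h3 h4 h5 h6
  simp only [mem_ofPred_eq] at *
  refine H (-(a + 2 * L) - h) (-(b + L) - (h + d)) (-(e + L) - (h - d)) h d L hL h2 ?_ h4 ?_ h6 ?_
  · convert h1 using 2; ring
  · convert h3 using 2; ring
  · convert h5 using 2; ring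

lemma hex_V1 {S : Set (ℝ × ℝ)} (H : HexIn S) (M : HexMax S) {s t : ℝ} (hs : (s, t) ∈ S)
    (ht : 0 ≤ t) : s ≤ 1 := by
  by_contra! h
  have hS := H.conv
  obtain ⟨k, hk, hk0⟩ : ∃ k : ℝ, (1 + k, (0:ℝ)) ∈ S ∧ 0 < k := by
    refine ⟨(s - 1) / (1 + t), ?_, by apply div_pos <;> linarith⟩
    refine mem_comb hS hs H.h5 (l := t / (1 + t)) (by positivity)
      ((div_le_one (by linarith)).2 (by linarith)) ?_ ?_ <;> field_simp <;> ring
  set ε := k / (2 * (1 + k)) with hε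
  have e0 : 0 < ε := by positivity
  have e1 : ε * (1 + k) = k / 2 := by rw [hε]; field_simp
  have e2 : ε ≤ 1 := by nlinarith
  have := M (-1) (-1) (-ε) 0 (1 - ε) (1 + k / 2) (by linarith) H.h3 (by convert hk using 2; ring)
    (mem_comb hS H.h2 H.h3 e0.le e2 (by ring) (by ring))
    (mem_comb hS H.h1 hk e0.le e2 (by linarith) (by ring))
    (mem_comb hS H.h4 H.h3 e0.le e2 (by ring) (by ring))
    (mem_comb hS H.h5 hk e0.le e2 (by linarith) (by ring))
  nlinarith [mul_pos e0 hk0]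

lemma hex_V2 {S : Set (ℝ × ℝ)} (H : HexIn S) (M : HexMax S) {s t : ℝ} (hs : (s, t) ∈ S)
    (ht : 1 < t) : s + t ≤ 1 := by
  by_contra! h
  have hS := H.conv
  have t0 : 0 < t := by linarith
  obtain ⟨k, hk, hk0, hk1⟩ : ∃ k : ℝ, (k, (1:ℝ)) ∈ S ∧ 0 < k ∧ k ≤ 1 := by
    have h1 : ((s + t - 1) / t, (1:ℝ)) ∈ S := by
      refine mem_comb hS hs H.h0 (l := (t - 1) / t) (div_nonneg (by linarith) t0.le)
        ((div_le_one t0).2 (by linarith)) ?_ ?_ <;> field_simp <;> ring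
    have h2 : 0 < (s + t - 1) / t := div_pos (by linarith) t0
    exact ⟨min ((s + t - 1) / t) 1, hseg hS H.h1 h1 (le_min h2.le zero_le_one) (min_le_left _ _),
      lt_min h2 one_pos, min_le_right _ _⟩
  obtain ⟨ε, e0, e1, e2⟩ : ∃ ε : ℝ, 0 < ε ∧ ε ≤ 1 / 2 ∧ 2 * ε ≤ (t - 1) * k / 2 := by
    have : 0 < (t - 1) * k := mul_pos (by linarith) hk0
    refine ⟨min (1/2) ((t - 1) * k / 4), lt_min (by norm_num) (by linarith), min_le_left _ _, ?_⟩
    linarith [min_le_right (1/2) ((t - 1) * k / 4)]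
  obtain ⟨l, l0, l1, l2⟩ : ∃ l : ℝ, 0 ≤ l ∧ l ≤ k / 2 ∧ l * (t - 1) = 2 * ε := by
    have : 0 < t - 1 := by linarith
    refine ⟨2 * ε / (t - 1), by positivity, ?_, by field_simp⟩
    rw [div_le_iff₀ this]; linarith
  have l3 : l ≤ 1 := by linarith
  have L1 : 1 - ε * (1 - k) / 2 ≤ 1 := by nlinarith
  have L0 : 0 ≤ 1 - ε * (1 - k) / 2 := by nlinarith
  have top1 : (-(1 - l) + l * s, ε + (1 + ε)) ∈ S :=
    mem_comb hS H.h2 hs l0 l3 (by ring) (by linarith)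
  have top2 : ((1 - l) * k + l * s, ε + (1 + ε)) ∈ S :=
    mem_comb hS hk hs l0 l3 (by ring) (by linarith)
  have b1 : ((0:ℝ), ε - (1 + ε)) ∈ S := by convert H.h4 using 2; ring
  have b2 : ((1:ℝ), ε - (1 + ε)) ∈ S := by convert H.h5 using 2; ring
  have := M (-1) (-(1 - l) + l * s) 0 ε (1 + ε) (1 - ε * (1 - k) / 2) L0
    (mem_comb hS H.h3 H.h2 e0.le (by linarith) (by ring) (by ring))
    (mem_comb hS H.h0 hk e0.le (by linarith) (by ring) (by ring))
    top1 (hseg hS top1 top2 (by linarith) (by nlinarith)) b1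
    (hseg hS b1 b2 (by linarith) (by linarith))
  nlinarith [mul_pos e0 hk0, mul_pos e0 e0]

lemma HexIn.zero {S : Set (ℝ × ℝ)} (H : HexIn S) : ((0:ℝ), (0:ℝ)) ∈ S :=
  hseg H.conv H.h3 H.h0 (by norm_num) (by norm_num)

/-- triangle -/
lemma HexIn.tri {S : Set (ℝ × ℝ)} (H : HexIn S) {s t : ℝ} (hs : 0 ≤ s) (ht : 0 ≤ t)
    (hst : s + t ≤ 1) : (s, t) ∈ S := by
  have h1 : (s, (0:ℝ)) ∈ S := hseg H.conv H.h3 H.h0 (by linarith) (by linarith)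
  have h2 : (s, 1 - s) ∈ S :=
    mem_comb H.conv H.h1 H.h0 hs (by linarith) (by ring) (by ring)
  exact vseg H.conv h1 h2 ht (by linarith)

lemma HexIn.tri2 {S : Set (ℝ × ℝ)} (H : HexIn S) {s t : ℝ} (hs : s ≤ 0) (hs1 : -1 ≤ s)
    (ht : 0 ≤ t) (ht1 : t ≤ 1) : (s, t) ∈ S := by
  have h1 : (s, (0:ℝ)) ∈ S := hseg H.conv H.h3 H.h0 (by linarith) (by linarith)
  have h2 : (s, (1:ℝ)) ∈ S := hseg H.conv H.h2 H.h1 (by linarith) (by linarith)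
  exact vseg H.conv h1 h2 ht (by linarith)

lemma HexIn.cov {S : Set (ℝ × ℝ)} (H : HexIn S) {s t : ℝ} (h : (s, t) ∈ S) (hs : 0 ≤ s)
    (hs1 : s ≤ 1) (ht : 0 ≤ t) (ht1 : t ≤ 1) :
    (2 * s, 2 * t) ∈ S ∨ (2 * s - 1, 2 * t - 1) ∈ S := by
  by_cases h1 : 2 * s + 2 * t ≤ 1
  · exact Or.inl (H.tri (by linarith) (by linarith) h1)
  right
  rcases le_total (2 * s) 1 with a | a <;> rcases le_total (2 * t) 1 with b | b
  · have := H.neg.tri (s := 1 - 2 * s) (t := 1 - 2 * t) (by linarith) (by linarith) (by linarith)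
    simpa using this
  · exact H.tri2 (by linarith) (by linarith) (by linarith) (by linarith)
  · have := H.neg.tri2 (s := 1 - 2 * s) (t := 1 - 2 * t) (by linarith) (by linarith) (by linarith)
      (by linarith)
    simpa using this
  · have h1 : (s, (0:ℝ)) ∈ S := hseg H.conv H.h3 H.h0 (by linarith) (by linarith)
    have h2 : ((0:ℝ), t) ∈ S := vseg H.conv H.h4 H.h1 (by linarith) (by linarith)
    have h3 : (s, 2 * t - 1) ∈ S := vseg H.conv h1 h (by linarith) (by linarith)
    have h4 : ((0:ℝ), 2 * t - 1) ∈ S := vseg H.conv H.zero h2 (by linarith) (by linarith)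
    exact hseg H.conv h4 h3 (by linarith) (by linarith)

lemma hex_upper {S : Set (ℝ × ℝ)} (H : HexIn S) (M : HexMax S) {s t : ℝ} (hs : (s, t) ∈ S)
    (ht : 0 ≤ t) : (2 * s, 2 * t) ∈ S ∨ (2 * s - 1, 2 * t - 1) ∈ S ∨
      (2 * s + 1, 2 * t - 2) ∈ S ∨ (2 * s + 2, 2 * t - 1) ∈ S := by
  have hm : (-s - t, t) ∈ {x : ℝ × ℝ | (-x.1 - x.2, x.2) ∈ S} := by simpa using hs
  have a1 := hex_V1 H M hs ht
  have a2 := hex_V1 H.mir M.mir hm ht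
  have a3 : 1 < t → s + t ≤ 1 := hex_V2 H M hs
  have a4 := hex_V2 H.mir M.mir hm
  rcases le_total 0 s with h0 | h0
  · have : t ≤ 1 := by
      by_contra! h
      linarith [a3 h]
    rcases H.cov hs h0 a1 ht this with h | h <;> simp [h]
  rcases le_total 0 (s + t) with h1 | h1
  · have b1 : -s ≤ 1 := by
      by_contra! h
      linarith [a4 (by linarith)]
    have b2 : s + t ≤ 1 := by
      by_contra! h
      linarith [a3 (by linarith)]
    have := H.rot.cov (s := s + t) (t := -s) (by simpa using hs) h1 b2 (by linarith) b1
    simp only [mem_ofPred_eq] at this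
    rcases this with h | h
    · left; convert h using 2 <;> ring
    · right; right; left; convert h using 2 <;> ring
  · have b1 : t ≤ 1 := by
      by_contra! h
      linarith [a4 (by linarith)]
    have := H.rot.rot.cov (s := t) (t := -s - t) (by simpa using hs) ht b1 (by linarith)
      (by linarith)
    simp only [mem_ofPred_eq] at this
    rcases this with h | h
    · left; convert h using 2 <;> ring
    · right; right; right; convert h using 2 <;> ring

lemma hex_cover {S : Set (ℝ × ℝ)} (H : HexIn S) (M : HexMax S) : ∃ τ : Fin 7 → ℝ × ℝ,
    ∀ s t : ℝ, (s, t) ∈ S → ∃ i, (2 * s - (τ i).1, 2 * t - (τ i).2) ∈ S := by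
  refine ⟨![(0,0), (1,1), (-1,2), (-2,1), (-1,-1), (1,-2), (2,-1)], fun s t hs => ?_⟩
  rcases le_total 0 t with ht | ht
  · rcases hex_upper H M hs ht with h | h | h | h
    · exact ⟨0, by simpa using h⟩
    · exact ⟨1, by simpa using h⟩
    · exact ⟨2, by simpa using h⟩
    · exact ⟨3, by simpa using h⟩
  · rcases hex_upper (s := -s) (t := -t) H.neg M.neg (by simpa using hs) (by linarith)
      with h | h | h | h <;> simp only [mem_ofPred_eq] at h
    · exact ⟨0, by simpa using h⟩
    · exact ⟨4, by convert h using 2 <;> simp <;> ring⟩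
    · exact ⟨5, by convert h using 2 <;> simp <;> ring⟩
    · exact ⟨6, by convert h using 2 <;> simp <;> ring⟩

noncomputable section HexExist

abbrev Cfg := (ℝ × ℝ) × (ℝ × ℝ) × ℝ × ℝ

def cA : Fin 6 → ℝ := ![1, 1, -1, -1, 0, 0]
def cB : Fin 6 → ℝ := ![0, 0, 0, 0, 1, 1]
def cC : Fin 6 → ℝ := ![1, -1, 1, -1, 2, -2]

def uv (θ : ℝ) : ℝ × ℝ := (Real.cos θ, Real.sin θ)

def pt (θ : ℝ) (w : Cfg) (i : Fin 6) : ℝ × ℝ :=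
  w.1 + cA i • w.2.1 + (cB i * w.2.2.2 + cC i * w.2.2.1) • uv θ

def Phi (θ : ℝ) (w : Cfg) : ℝ := w.2.2.1 * (Real.cos θ * w.2.1.2 - Real.sin θ * w.2.1.1)

def Gset (K : Set (ℝ × ℝ)) : Set (ℝ × Cfg) :=
  {z | z.1 ∈ Icc 0 Real.pi ∧ 0 ≤ z.2.2.2.1 ∧ (∀ i, pt z.1 z.2 i ∈ K) ∧
    ∀ w' : Cfg, 0 ≤ w'.2.2.1 → (∀ i, pt z.1 w' i ∈ interior K) → Phi z.1 w' ≤ Phi z.1 z.2}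

lemma cont_pt (i : Fin 6) : Continuous fun z : ℝ × Cfg => pt z.1 z.2 i := by
  unfold pt uv; fun_prop

lemma cont_pt' (i : Fin 6) (w : Cfg) : Continuous fun z : ℝ × Cfg => pt z.1 w i := by
  unfold pt uv; fun_prop

lemma cont_Phi : Continuous fun z : ℝ × Cfg => Phi z.1 z.2 := by
  unfold Phi; fun_prop

lemma cont_Phi' (w : Cfg) : Continuous fun z : ℝ × Cfg => Phi z.1 w := by
  unfold Phi; fun_prop

lemma Gset_closed {K : Set (ℝ × ℝ)} (hK : IsClosed K) : IsClosed (Gset K) := by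
  unfold Gset
  refine IsClosed.and ?_ (IsClosed.and ?_ (IsClosed.and ?_ ?_))
  · exact isClosed_Icc.preimage continuous_fst
  · exact isClosed_le continuous_const (by fun_prop)
  · simp only [ofPred_forall]
    exact isClosed_iInter fun i => hK.preimage (cont_pt i)
  · simp only [ofPred_forall]
    refine isClosed_iInter fun w' => isClosed_iInter fun _ => ?_
    refine isClosed_imp ?_ (isClosed_le (cont_Phi' w') cont_Phi)
    simp only [ofPred_forall]
    exact isOpen_iInter_of_finite fun i => isOpen_interior.preimage (cont_pt' i w')

def Tmap (y : ℝ × (Fin 6 → ℝ × ℝ)) : ℝ × Cfg :=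
  (y.1, (1/4 : ℝ) • (y.2 0 + y.2 1 + y.2 2 + y.2 3),
    (1/4 : ℝ) • (y.2 0 + y.2 1 - y.2 2 - y.2 3),
    (Real.cos y.1 * (y.2 0 - y.2 1).1 + Real.sin y.1 * (y.2 0 - y.2 1).2) / 2,
    (Real.cos y.1 * (y.2 4 + y.2 5 - (1/2 : ℝ) • (y.2 0 + y.2 1 + y.2 2 + y.2 3)).1
      + Real.sin y.1 * (y.2 4 + y.2 5 - (1/2 : ℝ) • (y.2 0 + y.2 1 + y.2 2 + y.2 3)).2) / 2)

lemma cont_T : Continuous Tmap := by unfold Tmap; fun_prop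

lemma T_pt (θ : ℝ) (w : Cfg) : Tmap (θ, pt θ w) = (θ, w) := by
  obtain ⟨⟨c1, c2⟩, ⟨v1, v2⟩, L, p⟩ := w
  have := Real.sin_sq_add_cos_sq θ
  simp only [Tmap, pt, uv, cA, cB, cC, Prod.mk.injEq, true_and]
  simp
  refine ⟨⟨by ring, by ring⟩, ⟨by ring, by ring⟩, by linear_combination L * this,
    by linear_combination p * this⟩

lemma box_compact {K : Set (ℝ × ℝ)} (hK : IsCompact K) (s : Set ℝ) (hs : IsCompact s) :
    IsCompact (Tmap '' (s ×ˢ (univ.pi fun _ => K))) :=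
  (hs.prod (isCompact_univ_pi fun _ => hK)).image cont_T

lemma Gset_compact {K : Set (ℝ × ℝ)} (hK : IsCompact K) : IsCompact (Gset K) := by
  refine (box_compact hK (Icc 0 Real.pi) isCompact_Icc).of_isClosed_subset (Gset_closed hK.isClosed) ?_
  rintro ⟨θ, w⟩ ⟨h1, _, h2, _⟩
  exact ⟨(θ, pt θ w), ⟨h1, fun i _ => h2 i⟩, T_pt θ w⟩

lemma Gset_nonempty {K : Set (ℝ × ℝ)} (hK : IsCompact K) (hne : K.Nonempty) {θ : ℝ}
    (hθ : θ ∈ Icc 0 Real.pi) : ∃ w, (θ, w) ∈ Gset K := by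
  set C : Set (ℝ × Cfg) := {z | z.1 ∈ ({θ} : Set ℝ) ∧ 0 ≤ z.2.2.2.1 ∧ ∀ i, pt z.1 z.2 i ∈ K} with hC
  have hCc : IsCompact C := by
    refine (box_compact hK {θ} isCompact_singleton).of_isClosed_subset ?_ ?_
    · refine IsClosed.and ?_ (IsClosed.and ?_ ?_)
      · exact isClosed_singleton.preimage continuous_fst
      · exact isClosed_le continuous_const (by fun_prop)
      · simp only [ofPred_forall]
        exact isClosed_iInter fun i => hK.isClosed.preimage (cont_pt i)
    · rintro ⟨θ', w⟩ ⟨h1, _, h2⟩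
      exact ⟨(θ', pt θ' w), ⟨h1, fun i _ => h2 i⟩, T_pt θ' w⟩
  obtain ⟨o, ho⟩ := hne
  have hCn : C.Nonempty := ⟨(θ, o, 0, 0, 0), rfl, le_rfl, fun i => by simpa [pt] using ho⟩
  obtain ⟨⟨θ', w⟩, ⟨h1, h2, h3⟩, hmax⟩ := hCc.exists_isMaxOn hCn cont_Phi.continuousOn
  have h1' : θ' = θ := h1
  subst h1'
  refine ⟨w, hθ, h2, h3, fun w' hw' hi => ?_⟩
  exact hmax (a := (θ', w')) ⟨rfl, hw', fun i => interior_subset (hi i)⟩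

lemma pt_comb (θ : ℝ) (w w' : Cfg) (a b : ℝ) (i : Fin 6) :
    pt θ (a • w + b • w') i = a • pt θ w i + b • pt θ w' i := by
  simp only [pt, Prod.fst_add, Prod.snd_add, Prod.smul_fst, Prod.smul_snd]
  module

lemma Gset_max {K : Set (ℝ × ℝ)} (hc : Convex ℝ K) (hi : (interior K).Nonempty) {θ : ℝ}
    {w : Cfg} (hw : (θ, w) ∈ Gset K) (w' : Cfg) (h0 : 0 ≤ w'.2.2.1) (h : ∀ i, pt θ w' i ∈ K) :
    Phi θ w' ≤ Phi θ w := by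
  obtain ⟨o, ho⟩ := hi
  have key : ∀ ε ∈ Ioo (0:ℝ) 1, (1 - ε) ^ 2 * Phi θ w' ≤ Phi θ w := by
    intro ε hε
    have := hw.2.2.2 (ε • ((o, 0, 0, 0) : Cfg) + (1 - ε) • w') (by
        simp; exact mul_nonneg (by linarith [hε.2]) h0) (by
        intro i
        rw [pt_comb]
        have e : pt θ ((o, 0, 0, 0) : Cfg) i = o := by simp [pt]
        rw [e]
        exact hc.combo_interior_self_mem_interior ho (h i) hε.1 (by linarith [hε.2]) (by ring))
    refine le_trans (le_of_eq ?_) this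
    simp [Phi]; ring
  have t1 : Filter.Tendsto (fun ε : ℝ => (1 - ε) ^ 2 * Phi θ w') (nhdsWithin 0 (Ioi 0))
      (nhds (Phi θ w')) := by
    have : Continuous (fun ε : ℝ => (1 - ε) ^ 2 * Phi θ w') := by fun_prop
    have := this.tendsto 0
    simp at this
    exact this.mono_left nhdsWithin_le_nhds
  refine le_of_tendsto t1 ?_
  filter_upwards [Ioo_mem_nhdsGT (zero_lt_one' ℝ)] with ε hε using key ε hε

lemma exists_pos {K : Set (ℝ × ℝ)} (hi : (interior K).Nonempty) (θ : ℝ) :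
    ∃ w : Cfg, 0 ≤ w.2.2.1 ∧ (∀ i, pt θ w i ∈ K) ∧ 0 < Phi θ w := by
  obtain ⟨o, ho⟩ := hi
  have hev : ∀ᶠ ε : ℝ in nhds 0, ∀ i,
      pt θ ((o, ε • (-Real.sin θ, Real.cos θ), ε, 0) : Cfg) i ∈ K := by
    rw [Filter.eventually_all]
    intro i
    have hc : Continuous fun ε : ℝ => pt θ ((o, ε • (-Real.sin θ, Real.cos θ), ε, 0) : Cfg) i := by
      unfold pt uv; fun_prop
    have := hc.tendsto 0
    refine this.eventually_mem ?_
    have e : pt θ ((o, (0:ℝ) • (-Real.sin θ, Real.cos θ), (0:ℝ), (0:ℝ)) : Cfg) i = o := by simp [pt]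
    rw [e]
    exact mem_interior_iff_mem_nhds.1 ho
  obtain ⟨ε, h1, h2⟩ := ((hev.filter_mono (nhdsWithin_le_nhds (s := Ioi 0))).and
    self_mem_nhdsWithin).exists
  have h2 : 0 < ε := h2
  refine ⟨_, h2.le, h1, ?_⟩
  have := Real.sin_sq_add_cos_sq θ
  have e : Phi θ ((o, ε • (-Real.sin θ, Real.cos θ), ε, 0) : Cfg) = ε ^ 2 := by
    simp [Phi]; linear_combination ε ^ 2 * this
  rw [e]; positivity

lemma exists_hex {K : Set (ℝ × ℝ)} (hK : IsCompact K) (hc : Convex ℝ K)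
    (hi : (interior K).Nonempty) : ∃ θ : ℝ, ∃ w : Cfg, 0 < w.2.2.1 ∧ 0 < Phi θ w ∧ w.2.2.2 = 0 ∧
      (∀ i, pt θ w i ∈ K) ∧ ∀ w' : Cfg, 0 ≤ w'.2.2.1 → (∀ i, pt θ w' i ∈ K) →
        Phi θ w' ≤ Phi θ w := by
  have hne : K.Nonempty := hi.mono interior_subset
  set A : Set ℝ := Prod.fst '' (Gset K ∩ {z | z.2.2.2.2 ≤ 0}) with hA
  set B : Set ℝ := Prod.fst '' (Gset K ∩ {z | 0 ≤ z.2.2.2.2}) with hB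
  have hAc : IsClosed A := (((Gset_compact hK).inter_right
    (isClosed_le (by fun_prop) continuous_const)).image continuous_fst).isClosed
  have hBc : IsClosed B := (((Gset_compact hK).inter_right
    (isClosed_le continuous_const (by fun_prop))).image continuous_fst).isClosed
  have hAB : Icc 0 Real.pi ⊆ A ∪ B := by
    intro θ hθ
    obtain ⟨w, hw⟩ := Gset_nonempty hK hne hθ
    rcases le_total w.2.2.2 0 with h | h
    · exact Or.inl ⟨_, ⟨hw, h⟩, rfl⟩
    · exact Or.inr ⟨_, ⟨hw, h⟩, rfl⟩
  -- swap
  have hpi := Real.pi_pos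
  have swap_pt : ∀ (w : Cfg) (θ θ' : ℝ), uv θ' = - uv θ → (∀ i, pt θ w i ∈ K) →
      ∀ i, pt θ' (w.1, -w.2.1, w.2.2.1, -w.2.2.2) i ∈ K := by
    intro w θ θ' h hw i
    obtain ⟨j, hjA, hjB, hjC⟩ : ∃ j, cA j = - cA i ∧ cB j = cB i ∧ cC j = - cC i := by
      refine ⟨(![3, 2, 1, 0, 5, 4] : Fin 6 → Fin 6) i, ?_, ?_, ?_⟩ <;> fin_cases i <;>
        simp [cA, cB, cC]
    convert hw j using 1
    simp only [pt, h, hjA, hjB, hjC]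
    module
  have swap : ∀ (w : Cfg) (θ θ' : ℝ), uv θ' = - uv θ → θ' ∈ Icc 0 Real.pi → (θ, w) ∈ Gset K →
      (θ', (w.1, -w.2.1, w.2.2.1, -w.2.2.2)) ∈ Gset K := by
    intro w θ θ' h hθ' hw
    have hc1 : Real.cos θ' = - Real.cos θ := congrArg Prod.fst h
    have hs1 : Real.sin θ' = - Real.sin θ := congrArg Prod.snd h
    refine ⟨hθ', hw.2.1, swap_pt w θ θ' h hw.2.2.1, fun w' h0 h' => ?_⟩
    have := Gset_max hc hi hw (w'.1, -w'.2.1, w'.2.2.1, -w'.2.2.2) h0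
      (swap_pt w' θ' θ (by rw [h, neg_neg]) fun i => interior_subset (h' i))
    simp [Phi, hc1, hs1] at this ⊢
    linarith
  have hu0 : uv Real.pi = - uv 0 := by simp [uv]
  have hu1 : uv 0 = - uv Real.pi := by simp [uv]
  obtain ⟨w0, hw0⟩ := Gset_nonempty hK hne (θ := 0) ⟨le_rfl, hpi.le⟩
  have hw1 := swap w0 0 Real.pi hu0 ⟨hpi.le, le_rfl⟩ hw0
  have hAn : (Icc 0 Real.pi ∩ A).Nonempty := by
    rcases le_total w0.2.2.2 0 with h | h
    · exact ⟨0, ⟨le_rfl, hpi.le⟩, _, ⟨hw0, h⟩, rfl⟩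
    · exact ⟨Real.pi, ⟨hpi.le, le_rfl⟩, _, ⟨hw1, by simpa using h⟩, rfl⟩
  have hBn : (Icc 0 Real.pi ∩ B).Nonempty := by
    rcases le_total w0.2.2.2 0 with h | h
    · exact ⟨Real.pi, ⟨hpi.le, le_rfl⟩, _, ⟨hw1, by simpa using h⟩, rfl⟩
    · exact ⟨0, ⟨le_rfl, hpi.le⟩, _, ⟨hw0, h⟩, rfl⟩
  obtain ⟨θ, _, ⟨⟨θ1, w1⟩, ⟨hw1, hp1⟩, rfl⟩, ⟨⟨θ2, w2⟩, ⟨hw2, hp2⟩, h12⟩⟩ :=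
    isPreconnected_closed_iff.1 isPreconnected_Icc A B hAc hBc hAB hAn hBn
  have h12 : θ2 = θ1 := h12
  subst h12
  have hp1 : w1.2.2.2 ≤ 0 := hp1
  have hp2 : 0 ≤ w2.2.2.2 := hp2
  obtain ⟨a, b, ha, hb, hab, hab0⟩ : ∃ a b : ℝ, 0 ≤ a ∧ 0 ≤ b ∧ a + b = 1 ∧
      a * w1.2.2.2 + b * w2.2.2.2 = 0 := by
    rcases eq_or_lt_of_le (hp1.trans hp2) with h | h
    · exact ⟨1, 0, by norm_num, by norm_num, by norm_num, by linarith⟩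
    · have : w2.2.2.2 - w1.2.2.2 ≠ 0 := by linarith
      refine ⟨w2.2.2.2 / (w2.2.2.2 - w1.2.2.2), -w1.2.2.2 / (w2.2.2.2 - w1.2.2.2),
        div_nonneg hp2 (by linarith), div_nonneg (by linarith) (by linarith), ?_, ?_⟩ <;>
      field_simp <;> ring
  obtain ⟨w3, h30, h3, h3p⟩ := exists_pos hi θ2
  have e1 := Gset_max hc hi hw1 w2 hw2.2.1 hw2.2.2.1
  have e2 := Gset_max hc hi hw2 w1 hw1.2.1 hw1.2.2.1
  have e3 := Gset_max hc hi hw1 w3 h30 h3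
  have L1 : 0 ≤ w1.2.2.1 := hw1.2.1
  have L2 : 0 ≤ w2.2.2.1 := hw2.2.1
  have hge : Phi θ2 w1 ≤ Phi θ2 (a • w1 + b • w2) := by
    have M0 : 0 < Phi θ2 w1 := by linarith
    have M1 : 0 < Phi θ2 w2 := by linarith
    have eq : Phi θ2 w1 = Phi θ2 w2 := by linarith
    simp only [Phi, Prod.fst_add, Prod.snd_add, Prod.smul_fst, Prod.smul_snd, smul_eq_mul] at *
    set D1 := Real.cos θ2 * w1.2.1.2 - Real.sin θ2 * w1.2.1.1 with hD1
    set D2 := Real.cos θ2 * w2.2.1.2 - Real.sin θ2 * w2.2.1.1 with hD2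
    have d1 : 0 < D1 := pos_of_mul_pos_right M0 L1
    have d2 : 0 < D2 := pos_of_mul_pos_right M1 L2
    have l1 : 0 < w1.2.2.1 := pos_of_mul_pos_left M0 d1.le
    have l2 : 0 < w2.2.2.1 := pos_of_mul_pos_left M1 d2.le
    have cross : 2 * (w1.2.2.1 * D1) ≤ w1.2.2.1 * D2 + w2.2.2.1 * D1 := by
      have hs : (w1.2.2.1 * D2) * (w2.2.2.1 * D1) = (w1.2.2.1 * D1) ^ 2 := by
        calc _ = (w1.2.2.1 * D1) * (w2.2.2.1 * D2) := by ring
          _ = _ := by rw [← eq]; ring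
      have p1 := mul_pos l1 d2
      have p2 := mul_pos l2 d1
      nlinarith [sq_nonneg (w1.2.2.1 * D2 - w2.2.2.1 * D1)]
    have hab2 : 0 ≤ a * b := mul_nonneg ha hb
    have : (a * w1.2.2.1 + b * w2.2.2.1) * (Real.cos θ2 * (a * w1.2.1.2 + b * w2.2.1.2) -
        Real.sin θ2 * (a * w1.2.1.1 + b * w2.2.1.1)) = a ^ 2 * (w1.2.2.1 * D1) +
        b ^ 2 * (w2.2.2.1 * D2) + a * b * (w1.2.2.1 * D2 + w2.2.2.1 * D1) := by
      rw [hD1, hD2]; ring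
    rw [this, ← eq]
    have hb' : b = 1 - a := by linarith
    have := mul_le_mul_of_nonneg_left cross hab2
    calc w1.2.2.1 * D1 = a ^ 2 * (w1.2.2.1 * D1) + b ^ 2 * (w1.2.2.1 * D1) +
          a * b * (2 * (w1.2.2.1 * D1)) := by rw [hb']; ring
      _ ≤ _ := by linarith
  have hpos : 0 < Phi θ2 (a • w1 + b • w2) := by linarith
  have hL : 0 ≤ (a • w1 + b • w2).2.2.1 := by
    simp; positivity
  refine ⟨θ2, a • w1 + b • w2, ?_, hpos, ?_, ?_, ?_⟩
  · rcases eq_or_lt_of_le hL with h | h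
    · rw [Phi, ← h] at hpos; simp at hpos
    · exact h
  · simpa using hab0
  · intro i
    rw [pt_comb]
    exact hc (hw1.2.2.1 i) (hw2.2.2.1 i) ha hb hab
  · intro w' h0 h'
    exact (Gset_max hc hi hw1 w' h0 h').trans hge

end HexExist

lemma plane_cover {K : Set (ℝ × ℝ)} (hK : IsCompact K) (hc : Convex ℝ K)
    (hi : (interior K).Nonempty) :
    ∃ T : Fin 7 → ℝ × ℝ, ∀ x ∈ K, ∃ i, ∃ y ∈ K, x = (1/2 : ℝ) • y + T i := by
  obtain ⟨θ, ⟨c, v, L, p⟩, hL, hPhi, hp, hpt, hmax⟩ := exists_hex hK hc hi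
  have hL : 0 < L := hL
  have hp : p = 0 := hp
  subst hp
  set A : ℝ × ℝ := (2 * L) • uv θ with hA
  set B : ℝ × ℝ := v + L • uv θ with hB
  set S : Set (ℝ × ℝ) := {z | c + z.1 • A + z.2 • B ∈ K} with hS
  have HI : HexIn S := by
    constructor
    · intro x hx y hy a b ha hb hab
      have := hc hx hy ha hb hab
      simp only [hS, mem_ofPred_eq]
      convert this using 1
      have e : c = a • c + b • c := by rw [← add_smul, hab, one_smul]
      conv_lhs => rw [e]
      simp only [Prod.fst_add, Prod.snd_add, Prod.smul_fst, Prod.smul_snd, smul_eq_mul]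
      module
    · have := hpt 4
      simp only [hS, mem_ofPred_eq]
      convert this using 1
      simp [pt, cA, cB, cC, hA]
    · have := hpt 0
      simp only [hS, mem_ofPred_eq]
      convert this using 1
      simp [pt, cA, cB, cC, hB]; module
    · have := hpt 1
      simp only [hS, mem_ofPred_eq]
      convert this using 1
      simp [pt, cA, cB, cC, hA, hB]; module
    · have := hpt 5
      simp only [hS, mem_ofPred_eq]
      convert this using 1
      simp [pt, cA, cB, cC, hA]
    · have := hpt 3
      simp only [hS, mem_ofPred_eq]
      convert this using 1
      simp [pt, cA, cB, cC, hB]; module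
    · have := hpt 2
      simp only [hS, mem_ofPred_eq]
      convert this using 1
      simp [pt, cA, cB, cC, hA, hB]; module
  have HM : HexMax S := by
    intro a b e h d l hl h1 h2 h3 h4 h5 h6
    simp only [hS, mem_ofPred_eq] at h1 h2 h3 h4 h5 h6
    have := hmax (c + ((b + e + l) / 2) • A + h • B, ((b - e) / 2) • A + d • B, l * L,
      (a + l - (b + e + l) / 2) * (2 * L)) (mul_nonneg hl hL.le) (by
        intro i
        fin_cases i
        · convert h4 using 1
          simp [pt, cA, cB, cC, hA, hB]; module
        · convert h3 using 1
          simp [pt, cA, cB, cC, hA, hB]; module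
        · convert h6 using 1
          simp [pt, cA, cB, cC, hA, hB]; module
        · convert h5 using 1
          simp [pt, cA, cB, cC, hA, hB]; module
        · convert h2 using 1
          simp [pt, cA, cB, cC, hA, hB]; module
        · convert h1 using 1
          simp [pt, cA, cB, cC, hA, hB]; module)
    have e1 : Phi θ (c + ((b + e + l) / 2) • A + h • B, ((b - e) / 2) • A + d • B, l * L,
      (a + l - (b + e + l) / 2) * (2 * L)) = (l * d) * Phi θ (c, v, L, 0) := by
      simp [Phi, hA, hB, uv]; ring
    rw [e1] at this
    exact le_of_mul_le_mul_right (by simpa using this) hPhi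
  obtain ⟨τ, hτ⟩ := hex_cover HI HM
  obtain ⟨D, hD⟩ : ∃ D, D = Real.cos θ * v.2 - Real.sin θ * v.1 := ⟨_, rfl⟩
  have hD0 : D ≠ 0 := by
    intro h0
    simp only [Phi] at hPhi
    rw [← hD, h0] at hPhi
    simp at hPhi
  refine ⟨fun i => (1/2 : ℝ) • (c + (τ i).1 • A + (τ i).2 • B), fun x hx => ?_⟩
  obtain ⟨s, t, hst⟩ : ∃ s t : ℝ, x = c + s • A + t • B := by
    refine ⟨((x - c).1 * B.2 - (x - c).2 * B.1) / (2 * L * D),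
      (Real.cos θ * (x - c).2 - Real.sin θ * (x - c).1) / D, ?_⟩
    have := hL.ne'
    ext
    · simp [hA, hB, uv]; field_simp; rw [hD]; ring
    · simp [hA, hB, uv]; field_simp; rw [hD]; ring
  obtain ⟨i, hi⟩ := hτ s t (by simpa only [hS, mem_ofPred_eq, ← hst] using hx)
  refine ⟨i, _, hi, ?_⟩
  rw [hst]
  module

lemma covers7 (K : Set (EuclideanSpace ℝ (Fin 2))) (hK : IsConvexBody K) :
    CoversWith K (1/2) 7 := by
  obtain ⟨h1, h2, h3⟩ := hK
  let e : EuclideanSpace ℝ (Fin 2) ≃L[ℝ] ℝ × ℝ :=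
    (EuclideanSpace.equiv (Fin 2) ℝ).trans (ContinuousLinearEquiv.finTwoArrow ℝ ℝ)
  obtain ⟨T, hT⟩ := plane_cover (K := e '' K) (h1.image e.continuous)
    (h2.is_linear_image e.toLinearEquiv.toLinearMap.isLinear) (by
      have := e.toHomeomorph.image_interior K
      have h : e '' interior K = interior (e '' K) := this
      rw [← h]; exact h3.image _)
  refine ⟨fun i => e.symm (T i), fun x hx => ?_⟩
  obtain ⟨i, _, ⟨y, hy, rfl⟩, hxy⟩ := hT (e x) ⟨x, hx, rfl⟩
  refine mem_iUnion.2 ⟨i, y, hy, ?_⟩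
  apply e.injective
  simp [hxy]

lemma gammaC_nonneg {V : Type*} [NormedAddCommGroup V] [NormedSpace ℝ V] (m : ℕ) (K : Set V) :
    0 ≤ gammaC m K := Real.sInf_nonneg fun _ h => h.1.le

lemma coin_le (K : Set (EuclideanSpace ℝ (Fin 2))) (hK : IsConvexBody K) : coin K ≤ 14 := by
  have h7 : gammaC 7 K ≤ 1 / 2 :=
    csInf_le ⟨0, fun _ h => h.1.le⟩ ⟨by norm_num, covers7 K hK⟩
  have : coin K ≤ (7 : ℕ) / (1 - gammaC 7 K) := by
    refine csInf_le ⟨0, ?_⟩ ⟨7, by norm_num, h7, rfl⟩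
    rintro _ ⟨m, _, h, rfl⟩
    exact div_nonneg (Nat.cast_nonneg _) (by linarith)
  refine this.trans ?_
  rw [div_le_iff₀ (by linarith)]
  push_cast
  linarith

lemma circ_norm (x : ℝ) : ‖(x : AddCircle (2 * Real.pi))‖ = Real.arccos (Real.cos x) := by
  have hpi := Real.pi_pos
  have h1 := AddCircle.norm_le_half_period (2 * Real.pi) (x := (x : AddCircle (2 * Real.pi)))
    (by positivity)
  rw [abs_of_pos (by positivity)] at h1
  rw [AddCircle.norm_eq] at h1 ⊢
  set n := round ((2 * Real.pi)⁻¹ * x)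
  rw [← Real.cos_sub_int_mul_two_pi x n, ← Real.cos_abs,
    Real.arccos_cos (abs_nonneg _) (by linarith)]

lemma arc_lemma (c1 c2 lam : ℝ) (h0 : 0 < lam) (h1 : lam < 1) : ∃ α : ℝ, ∀ y : ℝ,
    (Real.cos y - c1) ^ 2 + (Real.sin y - c2) ^ 2 ≤ lam ^ 2 →
    ‖((y - α : ℝ) : AddCircle (2 * Real.pi))‖ ≤ Real.arcsin lam ∧
    (c1 ^ 2 + c2 ^ 2 ≤ lam ^ 2 → 2 * lam ^ 2 ≤ 1 →
      ‖((y - α : ℝ) : AddCircle (2 * Real.pi))‖ ≤ Real.arccos (1 / (2 * lam))) := by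
  obtain ⟨r, α, hr, e1, e2⟩ : ∃ r α : ℝ, 0 ≤ r ∧ c1 = r * Real.cos α ∧ c2 = r * Real.sin α := by
    refine ⟨‖(⟨c1, c2⟩ : ℂ)‖, Complex.arg ⟨c1, c2⟩, norm_nonneg _, ?_, ?_⟩
    · rw [Complex.norm_mul_cos_arg]
    · rw [Complex.norm_mul_sin_arg]
  refine ⟨α, fun y hy => ?_⟩
  have s1 := Real.sin_sq_add_cos_sq y
  have s2 := Real.sin_sq_add_cos_sq α
  have hcos : 1 + r ^ 2 - lam ^ 2 ≤ 2 * r * Real.cos (y - α) := by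
    rw [Real.cos_sub]
    rw [e1, e2] at hy
    nlinarith
  have hr0 : 0 < r := by
    rcases eq_or_lt_of_le hr with h | h
    · rw [← h] at hcos; nlinarith
    · exact h
  rw [circ_norm]
  refine ⟨?_, fun hc hl => ?_⟩
  · rw [Real.arcsin_eq_arccos h0.le]
    apply Real.arccos_le_arccos
    have hq : 0 ≤ 1 - lam ^ 2 := by nlinarith
    have := Real.sq_sqrt hq
    have : 2 * r * √(1 - lam ^ 2) ≤ 2 * r * Real.cos (y - α) := by
      nlinarith [sq_nonneg (r - √(1 - lam ^ 2))]
    exact le_of_mul_le_mul_left this (by positivity)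
  · apply Real.arccos_le_arccos
    have hrl : r ≤ lam := by
      rw [e1, e2] at hc
      have : r ^ 2 ≤ lam ^ 2 := by nlinarith
      exact abs_le_of_sq_le_sq' this h0.le |>.2
    rw [div_le_iff₀ (by positivity)]
    have h3 : r ≤ lam * (1 + r ^ 2 - lam ^ 2) := by
      have : 0 ≤ (lam - r) * (1 - lam * (lam + r)) := by
        apply mul_nonneg (by linarith)
        nlinarith
      nlinarith
    have h4 : r * 1 ≤ r * (Real.cos (y - α) * (2 * lam)) := by nlinarith
    exact le_of_mul_le_mul_left h4 hr0

lemma disk_bound (m : ℕ) (lam : ℝ) (h0 : 0 < lam) (h1 : 2 * lam ^ 2 ≤ 1)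
    (h : CoversWith (Metric.closedBall (0 : EuclideanSpace ℝ (Fin 2)) 1) lam m) :
    Real.pi ≤ ((m : ℝ) - 1) * Real.arcsin lam + Real.arccos (1 / (2 * lam)) := by
  obtain ⟨t, ht⟩ := h
  have hl1 : lam < 1 := by nlinarith
  have hcov : ∀ a b : ℝ, a ^ 2 + b ^ 2 ≤ 1 → ∃ i, (a - t i 0) ^ 2 + (b - t i 1) ^ 2 ≤ lam ^ 2 := by
    intro a b hab
    have hm : (!₂[a, b] : EuclideanSpace ℝ (Fin 2)) ∈
        Metric.closedBall (0 : EuclideanSpace ℝ (Fin 2)) 1 := by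
      rw [mem_closedBall_zero_iff, EuclideanSpace.norm_eq, Real.sqrt_le_iff]
      refine ⟨zero_le_one, ?_⟩
      simpa [Fin.sum_univ_two] using hab
    obtain ⟨i, x, hx, hxe⟩ := mem_iUnion.1 (ht hm)
    refine ⟨i, ?_⟩
    rw [mem_closedBall_zero_iff, EuclideanSpace.norm_eq, Real.sqrt_le_iff] at hx
    replace hx := hx.2
    simp only [Fin.sum_univ_two, Real.norm_eq_abs, sq_abs] at hx
    have ea : a = lam * x 0 + t i 0 := by
      have := congrArg (fun z : EuclideanSpace ℝ (Fin 2) => z 0) hxe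
      simpa using this.symm
    have eb : b = lam * x 1 + t i 1 := by
      have := congrArg (fun z : EuclideanSpace ℝ (Fin 2) => z 1) hxe
      simpa using this.symm
    rw [ea, eb]
    nlinarith [sq_nonneg lam]
  obtain ⟨i0, hi0⟩ := hcov 0 0 (by norm_num)
  choose α hα using fun i => arc_lemma (t i 0) (t i 1) lam h0 hl1
  set β : Fin m → ℝ := fun i => if i = i0 then Real.arccos (1 / (2 * lam)) else Real.arcsin lam
    with hβ
  have hβ0 : ∀ i, 0 ≤ β i := by
    intro i
    simp only [hβ]
    split_ifs
    · exact Real.arccos_nonneg _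
    · exact Real.arcsin_nonneg.2 h0.le
  have : Fact (0 < 2 * Real.pi) := ⟨by positivity⟩
  have hun : (univ : Set (AddCircle (2 * Real.pi))) ⊆
      ⋃ i, Metric.closedBall ((α i : ℝ) : AddCircle (2 * Real.pi)) (β i) := by
    intro z _
    induction z using QuotientAddGroup.induction_on with
    | H y =>
      obtain ⟨i, hi⟩ := hcov (Real.cos y) (Real.sin y) (by linarith [Real.sin_sq_add_cos_sq y])
      refine mem_iUnion.2 ⟨i, ?_⟩
      rw [Metric.mem_closedBall, dist_eq_norm]
      have := hα i y hi
      simp only [hβ]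
      split_ifs with hii
      · exact this.2 (by rw [hii]; linarith) h1
      · exact this.1
  have hv := (MeasureTheory.measure_mono (μ := MeasureTheory.volume) hun).trans
    (MeasureTheory.measure_iUnion_le _)
  rw [AddCircle.measure_univ, tsum_fintype] at hv
  have hv2 : ENNReal.ofReal (2 * Real.pi) ≤ ENNReal.ofReal (∑ i, 2 * β i) := by
    rw [ENNReal.ofReal_sum_of_nonneg (fun i _ => by linarith [hβ0 i])]
    refine hv.trans (Finset.sum_le_sum fun i _ => ?_)
    rw [AddCircle.volume_closedBall]
    exact ENNReal.ofReal_le_ofReal (min_le_right _ _)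
  rw [ENNReal.ofReal_le_ofReal_iff (Finset.sum_nonneg fun i _ => by linarith [hβ0 i]),
    ← Finset.mul_sum] at hv2
  have hs : ∑ i, β i = Real.arccos (1 / (2 * lam)) + ((m : ℝ) - 1) * Real.arcsin lam := by
    rw [← Finset.add_sum_erase _ _ (Finset.mem_univ i0)]
    congr 1
    · simp [hβ]
    · rw [Finset.sum_congr rfl (g := fun _ => Real.arcsin lam)
        (fun i hi => by simp [hβ, Finset.ne_of_mem_erase hi])]
      rw [Finset.sum_const, Finset.card_erase_of_mem (Finset.mem_univ _), Finset.card_univ,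
        Fintype.card_fin, nsmul_eq_mul, Nat.cast_sub i0.pos]
      simp
  linarith

lemma disk_bound' (m : ℕ) (lam : ℝ) (h0 : 0 < lam) (h1 : lam < 1 / 2)
    (h : CoversWith (Metric.closedBall (0 : EuclideanSpace ℝ (Fin 2)) 1) lam m) :
    Real.pi ≤ ((m : ℝ) - 1) * Real.arcsin lam := by
  have := disk_bound m lam h0 (by nlinarith) h
  rwa [Real.arccos_of_one_le (by rw [le_div_iff₀ (by positivity)]; linarith), add_zero] at this

lemma sin_num (m : ℕ) (h7 : 7 ≤ m) (h13 : m ≤ 13) :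
    1 - (m : ℝ) / 14 ≤ Real.sin (Real.pi / ((m : ℝ) - 1)) := by
  have p1 := Real.pi_gt_d2
  have p2 := Real.pi_lt_d2
  rcases eq_or_lt_of_le h7 with rfl | h8
  · norm_num
  rcases eq_or_lt_of_le (Nat.succ_le_of_lt h8) with rfl | h9
  · set x := Real.pi / (((Nat.succ 7 : ℕ) : ℝ) - 1) with hx
    have e : x = Real.pi / 7 := by rw [hx]; norm_num
    have x1 : 0.448 < x := by rw [e]; linarith
    have x2 : x < 0.45 := by rw [e]; linarith
    have := Real.sin_bound (x := x) (by rw [abs_of_pos] <;> linarith)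
    rw [abs_of_pos (by linarith : 0 < x)] at this
    have := (abs_le.1 this).1
    have x3 : x ^ 3 ≤ 0.45 ^ 3 := by gcongr
    have x4 : x ^ 5 ≤ 0.45 ^ 5 := by gcongr
    norm_num at *
    linarith
  · have hm : (9:ℝ) ≤ m := by exact_mod_cast h9
    have hm2 : (m:ℝ) ≤ 13 := by exact_mod_cast h13
    have x0 : 0 < Real.pi / ((m : ℝ) - 1) := div_pos Real.pi_pos (by linarith)
    have x1 : Real.pi / ((m : ℝ) - 1) ≤ 0.395 := by
      rw [div_le_iff₀ (by linarith)]; linarith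
    have x2 : 3.14 / ((m : ℝ) - 1) ≤ Real.pi / ((m : ℝ) - 1) :=
      div_le_div_of_nonneg_right (by linarith) (by linarith)
    have x3 := Real.sin_gt_sub_cube x0
    set x := Real.pi / ((m : ℝ) - 1) with hx
    have x4 : 0.96 * x ≤ x - x ^ 3 / 6 := by
      have : x ^ 2 ≤ 0.395 ^ 2 := by gcongr
      nlinarith
    have h9' : 9 ≤ m := h9
    have x5 : 1 - (m : ℝ) / 14 ≤ 0.96 * (3.14 / ((m : ℝ) - 1)) := by
      clear_value x
      interval_cases m <;> norm_num
    linarith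

lemma disk_lower (m : ℕ) (hm : 0 < m)
    (h : gammaC m (Metric.closedBall (0 : EuclideanSpace ℝ (Fin 2)) 1) ≤ 1 / 2) :
    14 ≤ (m : ℝ) / (1 - gammaC m (Metric.closedBall (0 : EuclideanSpace ℝ (Fin 2)) 1)) := by
  set g := gammaC m (Metric.closedBall (0 : EuclideanSpace ℝ (Fin 2)) 1) with hg
  have g0 : 0 ≤ g := gammaC_nonneg _ _
  rw [le_div_iff₀ (by linarith)]
  by_contra! hlt
  have hex : ∀ b, g < b → ∃ lam, 0 < lam ∧ lam < b ∧
      CoversWith (Metric.closedBall (0 : EuclideanSpace ℝ (Fin 2)) 1) lam m := by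
    intro b hb
    obtain ⟨lam, h1, h2⟩ := exists_lt_of_csInf_lt (s := {lam : ℝ | 0 < lam ∧ CoversWith
      (Metric.closedBall (0 : EuclideanSpace ℝ (Fin 2)) 1) lam m})
      ⟨1, one_pos, fun _ => 0, fun x hx => mem_iUnion.2 ⟨⟨0, hm⟩, x, hx, by simp⟩⟩ hb
    exact ⟨lam, h1.1, h2, h1.2⟩
  have hpi := Real.pi_pos
  have hm1 : (1:ℝ) ≤ m := by exact_mod_cast hm
  rcases le_or_gt 7 m with h7 | h7
  · have h7r : (7:ℝ) ≤ m := by exact_mod_cast h7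
    have h13 : m ≤ 13 := by
      have : (m:ℝ) < 14 := by nlinarith
      have : m < 14 := by exact_mod_cast this
      omega
    obtain ⟨lam, l0, l1, l2⟩ := hex (1 - (m:ℝ) / 14) (by linarith)
    have := disk_bound' m lam l0 (by linarith) l2
    have h2 : Real.pi / ((m:ℝ) - 1) ≤ Real.arcsin lam := by
      rw [div_le_iff₀ (by linarith)]; linarith
    rw [Real.le_arcsin_iff_sin_le' ⟨by
      have : 0 < Real.pi / ((m:ℝ) - 1) := div_pos hpi (by linarith)
      linarith, by
      rw [div_le_div_iff₀ (by linarith) (by norm_num)]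
      nlinarith⟩] at h2
    linarith [sin_num m h7 h13]
  · have h6 : (m:ℝ) ≤ 6 := by
      have : m ≤ 6 := by omega
      exact_mod_cast this
    have a12 : Real.arcsin (1/2) = Real.pi / 6 := by
      rw [← Real.sin_pi_div_six, Real.arcsin_sin] <;> linarith
    have hcont : ContinuousAt (fun x : ℝ => 5 * Real.arcsin x + Real.arccos (1 / (2 * x))) (1/2) := by
      have : ContinuousAt (fun x : ℝ => 1 / (2 * x)) (1/2) := by
        apply ContinuousAt.div <;> first | fun_prop | norm_num
      exact (continuousAt_const.mul Real.continuous_arcsin.continuousAt).add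
        (Real.continuous_arccos.continuousAt.comp this)
    have hev : ∀ᶠ x in nhds (1/2 : ℝ), 5 * Real.arcsin x + Real.arccos (1 / (2 * x)) < Real.pi := by
      refine hcont.eventually_lt_const ?_
      beta_reduce
      rw [a12]
      norm_num
      linarith
    obtain ⟨δ, d0, hδ⟩ := Metric.eventually_nhds_iff.1 hev
    obtain ⟨lam, l0, l1, l2⟩ := hex (1/2 + min δ 0.1) (by
      have : 0 < min δ 0.1 := lt_min d0 (by norm_num)
      linarith)
    have m1 := min_le_left δ 0.1
    have m2 := min_le_right δ 0.1
    have a0 : 0 ≤ Real.arcsin lam := Real.arcsin_nonneg.2 l0.le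
    have h5 : ((m:ℝ) - 1) * Real.arcsin lam ≤ 5 * Real.arcsin lam :=
      mul_le_mul_of_nonneg_right (by linarith) a0
    rcases lt_or_ge lam (1/2) with hl | hl
    · have := disk_bound' m lam l0 hl l2
      have := Real.monotone_arcsin hl.le
      rw [a12] at this
      linarith
    · have := disk_bound m lam l0 (by nlinarith) l2
      have := hδ (y := lam) (by rw [Real.dist_eq, abs_of_nonneg] <;> linarith)
      linarith

lemma disk_body : IsConvexBody (Metric.closedBall (0 : EuclideanSpace ℝ (Fin 2)) 1) := by
  refine ⟨isCompact_closedBall _ _, convex_closedBall _ _, ⟨0, ?_⟩⟩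
  exact Metric.ball_subset_interior_closedBall (Metric.mem_ball_self one_pos)

/-- the circular disk maximizes the covering index in the plane. -/
theorem coin_disk_max :
    coin (Metric.closedBall (0 : EuclideanSpace ℝ (Fin 2)) 1) = 14 ∧
    ∀ K : Set (EuclideanSpace ℝ (Fin 2)), IsConvexBody K → coin K ≤ 14 := by
  refine ⟨le_antisymm (coin_le _ disk_body) ?_, fun K hK => coin_le K hK⟩
  refine le_csInf ?_ ?_
  · exact ⟨_, 7, by norm_num, csInf_le ⟨0, fun _ h => h.1.le⟩
      ⟨by norm_num, covers7 _ disk_body⟩, rfl⟩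
  · rintro _ ⟨m, hm, h, rfl⟩
    exact disk_lower m hm h
end

section
/- Let K_i ⊆ ℝ^{d_i} (i = 1, …, n) be convex bodies each of which is tightly covered. Then their Cartesian product K_1 × ⋯ × K_n ⊆ ℝ^{d_1} × ⋯ × ℝ^{d_n} is tightly covered. -/
open Set Pointwise

theorem coversWith_exists_aux {V : Type*} [NormedAddCommGroup V] [NormedSpace ℝ V]
    (K : Set V) (hK : IsConvexBody K) (lam : ℝ) (h0 : 0 < lam) :
    ∃ m, CoversWith K lam m := by
  obtain ⟨hc, -, a, ha⟩ := hK
  have hne : lam ≠ 0 := h0.ne'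
  obtain ⟨s, -, hs⟩ := hc.elim_nhds_subcover
    (fun x => (fun y => lam⁻¹ • (y - x) + a) ⁻¹' K) (by
      intro x _
      have hcont : Continuous (fun y : V => lam⁻¹ • (y - x) + a) := by fun_prop
      refine hcont.continuousAt.preimage_mem_nhds ?_
      simpa using mem_interior_iff_mem_nhds.1 ha)
  refine ⟨s.card, fun i => ((s.equivFin.symm i : s) : V) - lam • a, ?_⟩
  intro y hy
  obtain ⟨x, hx, hxy⟩ := mem_iUnion₂.1 (hs hy)
  refine mem_iUnion.2 ⟨s.equivFin ⟨x, hx⟩, _, hxy, ?_⟩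
  simp [smul_add, smul_smul, hne]

/-- a Cartesian product of tightly covered convex bodies is
tightly covered. -/
theorem tightlyCovered_directSum (n : ℕ) (d : Fin n → ℕ)
    (K : ∀ i, Set (Fin (d i) → ℝ)) (hK : ∀ i, IsConvexBody (K i))
    (htight : ∀ i, TightlyCovered (K i)) :
    TightlyCovered (Set.univ.pi K) := by
  intro lam h0 h1
  have hcov : ∀ i, CoversWith (K i) lam (covN lam (K i)) := fun i =>
    Nat.sInf_mem (s := {m | CoversWith (K i) lam m}) (coversWith_exists_aux (K i) (hK i) lam h0)
  have hle : covN lam (Set.univ.pi K) ≤ Fintype.card (∀ i, Fin (covN lam (K i))) := by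
    apply Nat.sInf_le
    choose t ht using hcov
    let e := Fintype.equivFin (∀ i, Fin (covN lam (K i)))
    refine ⟨fun k i => t i (e.symm k i), ?_⟩
    intro y hy
    have : ∀ i, ∃ j, ∃ x ∈ K i, lam • x + t i j = y i := by
      intro i
      obtain ⟨j, hj⟩ := mem_iUnion.1 (ht i (hy i (mem_univ i)))
      exact ⟨j, hj⟩
    choose j x hx hxy using this
    refine mem_iUnion.2 ⟨e j, x, fun i _ => hx i, ?_⟩
    funext i
    simpa using hxy i
  choose p hp hpp using fun i => htight i lam h0 h1
  let e := (Fintype.equivFin (∀ i, Fin (covN lam (K i)))).symm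
  refine ⟨fun k i => p i (e (Fin.castLE hle k) i), fun k i _ => hp i _, ?_⟩
  rintro k l hkl t ⟨⟨x, hx, hxk⟩, ⟨y, hy, hyl⟩⟩
  have hne : e (Fin.castLE hle k) ≠ e (Fin.castLE hle l) := fun h =>
    hkl (Fin.castLE_injective hle (e.injective h))
  obtain ⟨i, hi⟩ := Function.ne_iff.1 hne
  exact hpp i _ _ hi (t i) ⟨⟨x i, hx i (mem_univ i), congrFun hxk i⟩,
    ⟨y i, hy i (mem_univ i), congrFun hyl i⟩⟩
end

section
/- Every convex body K ⊆ ℝ² satisfies wcoin(K) ≥ 8, and wcoin([0,1]²) = 8; thus the affine square minimizes the weak covering index in the plane. -/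
open Set Pointwise

theorem cover_sub_hull {V : Type*} [NormedAddCommGroup V] [NormedSpace ℝ V]
    {K : Set V} (hK : IsCompact K) {lam : ℝ} (h1 : lam < 1) {m : ℕ}
    {c : Fin m → V} (hc : ∀ p ∈ K, ∃ i, ∃ q ∈ K, p = lam • q + (1 - lam) • c i) (h0 : 0 < lam) :
    K ⊆ convexHull ℝ (range c) := by
  intro x hx
  by_contra hxn
  have hcomp : IsCompact (convexHull ℝ (range c)) := (finite_range c).isCompact_convexHull ℝ
  obtain ⟨f, u, hu, hfx⟩ := geometric_hahn_banach_closed_point (convex_convexHull ℝ (range c))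
    hcomp.isClosed hxn
  obtain ⟨p, hp, hmax⟩ := hK.exists_isMaxOn ⟨x, hx⟩ f.continuous.continuousOn
  obtain ⟨i, q, hq, hpq⟩ := hc p hp
  have e1 : f p = lam * f q + (1 - lam) * f (c i) := by
    conv_lhs => rw [hpq]
    simp
  have e2 : f q ≤ f p := hmax hq
  have e3 : f x ≤ f p := hmax hx
  have e4 : f (c i) < u := hu _ (subset_convexHull ℝ _ (mem_range_self i))
  have : (1 - lam) * f (c i) < (1 - lam) * f p := by
    apply mul_lt_mul_of_pos_left <;> linarith
  have : lam * f q ≤ lam * f p := mul_le_mul_of_nonneg_left e2 h0.le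
  linarith

theorem cover_centers {V : Type*} [NormedAddCommGroup V] [NormedSpace ℝ V]
    {K : Set V} {lam : ℝ} (h1 : lam < 1) {m : ℕ} (h : CoversWith K lam m) :
    ∃ c : Fin m → V, ∀ p ∈ K, ∃ i, ∃ q ∈ K, p = lam • q + (1 - lam) • c i := by
  obtain ⟨t, ht⟩ := h
  refine ⟨fun i => (1 - lam)⁻¹ • t i, fun p hp => ?_⟩
  obtain ⟨i, q, hq, e⟩ := mem_iUnion.1 (ht hp)
  refine ⟨i, q, hq, ?_⟩
  rw [smul_inv_smul₀ (by linarith)]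
  exact e.symm

theorem span_top {V : Type*} [NormedAddCommGroup V] [NormedSpace ℝ V] [FiniteDimensional ℝ V]
    {K : Set V} (hK : IsConvexBody K) {lam : ℝ} (h1 : lam < 1) {m : ℕ}
    {c : Fin m → V} (hc : ∀ p ∈ K, ∃ i, ∃ q ∈ K, p = lam • q + (1 - lam) • c i) (h0 : 0 < lam) :
    affineSpan ℝ (range c) = ⊤ := by
  rw [← interior_convexHull_nonempty_iff_affineSpan_eq_top]
  exact hK.2.2.mono (interior_mono (cover_sub_hull hK.1 h1 hc h0))

theorem lt_three {K : Set (Fin 2 → ℝ)} (hK : IsConvexBody K) {lam : ℝ} (h0 : 0 < lam) {m : ℕ}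
    (hm : 0 < m) (hm3 : m < 3) (h : CoversWith K lam m) : 1 ≤ lam := by
  by_contra! h1
  obtain ⟨c, hc⟩ := cover_centers h1 h
  have hs := span_top hK h1 hc h0
  obtain ⟨n, rfl⟩ : ∃ n, m = n + 1 := ⟨m - 1, by omega⟩
  have h2 := finrank_vectorSpan_range_le ℝ c (n := n) (by simp)
  rw [← direction_affineSpan, hs, AffineSubspace.direction_top, finrank_top] at h2
  simp at h2
  omega

theorem three_aux {K : Set (Fin 2 → ℝ)} (hK : IsConvexBody K) {lam : ℝ} (h0 : 0 < lam)
    (h1 : lam < 2 / 3) (x y z : (Fin 2 → ℝ) →ᵃ[ℝ] ℝ)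
    (hx : Continuous x) (hy : Continuous y) (hz : Continuous z)
    (hsum : ∀ p, x p + y p + z p = 1)
    (hint : ∀ p ∈ interior K, x p < 1)
    (hG : ∀ p ∈ K, x p = 1 / 3 → y p = 1 / 3 → z p = 1 / 3 → False)
    (hcov : ∀ p ∈ K, (∃ q ∈ K, x p = lam * x q + (1 - lam) ∧ y p = lam * y q ∧ z p = lam * z q) ∨
      1 - lam ≤ y p ∨ 1 - lam ≤ z p) :
    ∀ p ∈ interior K, y p = z p → y p ≤ x p → False := by
  intro p hp hyz hyx
  have hpK := interior_subset hp
  have hC : IsCompact (K ∩ {p | y p = z p}) := hK.1.inter_right (isClosed_eq hy hz)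
  obtain ⟨r, hr, hmin⟩ := hC.exists_isMinOn ⟨p, hpK, hyz⟩ hx.continuousOn
  have hrp : x r ≤ x p := hmin ⟨hpK, hyz⟩
  have hryz : y r = z r := hr.2
  have hp1 := hint p hp
  have sp := hsum p
  have sr := hsum r
  have hr3 : x r < 1 / 3 := by
    rcases hcov r hr.1 with ⟨q, hq, e1, e2, e3⟩ | h | h
    · exfalso
      have hq' : x r ≤ x q := hmin ⟨hq, by
        have : lam * y q = lam * z q := by rw [← e2, ← e3, hryz]
        exact mul_left_cancel₀ h0.ne' this⟩
      nlinarith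
    · linarith
    · linarith
  have hp3 : 1 / 3 ≤ x p := by linarith
  set s := (1 / 3 - x r) / (x p - x r) with hs
  have hd : 0 < x p - x r := by linarith
  have hs0 : 0 ≤ s := div_nonneg (by linarith) hd.le
  have hs1 : s ≤ 1 := by rw [hs, div_le_one hd]; linarith
  have hw := hK.2.1.lineMap_mem hr.1 hpK ⟨hs0, hs1⟩
  have ex : x (AffineMap.lineMap r p s) = 1 / 3 := by
    rw [AffineMap.apply_lineMap, AffineMap.lineMap_apply_ring', hs]
    field_simp; ring
  have eyz : y (AffineMap.lineMap r p s) = z (AffineMap.lineMap r p s) := by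
    rw [AffineMap.apply_lineMap, AffineMap.apply_lineMap, hyz, hryz]
  have sw := hsum (AffineMap.lineMap r p s)
  exact hG _ hw ex (by linarith) (by linarith)

theorem three {K : Set (Fin 2 → ℝ)} (hK : IsConvexBody K) {lam : ℝ} (h0 : 0 < lam)
    (h : CoversWith K lam 3) : 2 / 3 ≤ lam := by
  by_contra! h1
  have h1' : lam < 1 := by linarith
  obtain ⟨c, hc⟩ := cover_centers h1' h
  have hs := span_top hK h1' hc h0
  have hsub := cover_sub_hull hK.1 h1' hc h0
  have hind : AffineIndependent ℝ c := by
    rw [affineIndependent_iff_finrank_vectorSpan_eq ℝ c (n := 2) (by simp),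
      ← direction_affineSpan, hs, AffineSubspace.direction_top, finrank_top]
    simp
  let b : AffineBasis (Fin 3) ℝ (Fin 2 → ℝ) := ⟨c, hind, hs⟩
  have hbc : ∀ i, b i = c i := fun i => rfl
  have hcont : ∀ i, Continuous (b.coord i) := fun i => (b.coord i).continuous_of_finiteDimensional
  have hsum : ∀ p, b.coord 0 p + b.coord 1 p + b.coord 2 p = 1 := by
    intro p
    have := b.sum_coord_apply_eq_one p
    rwa [Fin.sum_univ_three] at this
  have hnn : ∀ p ∈ K, ∀ i, 0 ≤ b.coord i p := by
    intro p hp i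
    have := hsub hp
    have hr : range c = range b := rfl
    rw [hr, b.convexHull_eq_nonneg_coord] at this
    exact this i
  have hcoord : ∀ i j q, b.coord j (lam • q + (1 - lam) • c i) =
      lam * b.coord j q + (1 - lam) * (if j = i then 1 else 0) := by
    intro i j q
    have e : lam • q + (1 - lam) • c i = AffineMap.lineMap (c i) q lam := by
      rw [AffineMap.lineMap_apply_module]; abel
    rw [e, AffineMap.apply_lineMap, AffineMap.lineMap_apply_ring', ← hbc, b.coord_apply]
    ring
  have hcov : ∀ p ∈ K, ∃ i, ∃ q ∈ K, ∀ j, b.coord j p =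
      lam * b.coord j q + (1 - lam) * (if j = i then 1 else 0) := by
    intro p hp
    obtain ⟨i, q, hq, e⟩ := hc p hp
    exact ⟨i, q, hq, fun j => by rw [e, hcoord]⟩
  have hcov1 : ∀ p ∈ K, ∃ i, 1 - lam ≤ b.coord i p := by
    intro p hp
    obtain ⟨i, q, hq, e⟩ := hcov p hp
    refine ⟨i, ?_⟩
    rw [e i]
    have := mul_nonneg h0.le (hnn q hq i)
    simp; linarith
  have hint : ∀ i, ∀ p ∈ interior K, b.coord i p < 1 := by
    intro i p hp
    have hle : ∀ p ∈ K, b.coord i p ≤ 1 := by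
      intro p hp
      have h0 := hnn p hp 0
      have h1 := hnn p hp 1
      have h2 := hnn p hp 2
      have := hsum p
      fin_cases i <;> simp <;> linarith
    have ho : IsOpen (b.coord i '' interior K) :=
      isOpenMap_barycentric_coord b i _ isOpen_interior
    have hss : b.coord i '' interior K ⊆ Iic 1 := by
      rintro _ ⟨q, hq, rfl⟩
      exact hle q (interior_subset hq)
    have := interior_maximal hss ho (mem_image_of_mem _ hp)
    rwa [interior_Iic] at this
  have hq : ∀ i, ∃ p ∈ interior K, 1 / 3 < b.coord i p := by
    intro i
    obtain ⟨p, hp, hmax⟩ := hK.1.exists_isMaxOn (hK.2.2.mono interior_subset) (hcont i).continuousOn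
    have hp3 : 1 / 3 < b.coord i p := by
      obtain ⟨j, q, hq, e⟩ := hcov p hp
      have hle : b.coord i q ≤ b.coord i p := hmax hq
      have e := e i
      obtain ⟨w, hw⟩ := hK.2.2
      by_cases hij : i = j
      · rw [if_pos hij] at e
        have := mul_nonneg h0.le (hnn q hq i)
        linarith
      · rw [if_neg hij] at e
        exfalso
        have hn := hnn p hp i
        have hz : b.coord i p ≤ 0 := by nlinarith
        -- the coordinate vanishes on K
        have ho : IsOpen (b.coord i '' interior K) := isOpenMap_barycentric_coord b i _ isOpen_interior
        have hss : b.coord i '' interior K ⊆ Iic 0 := by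
          rintro _ ⟨q, hq, rfl⟩
          exact (hmax (interior_subset hq)).trans hz
        have h3 := interior_maximal hss ho (mem_image_of_mem _ hw)
        rw [interior_Iic] at h3
        have := hnn w (interior_subset hw) i
        exact absurd h3 (not_lt.2 this)
    have hcl : p ∈ closure (interior K) := by
      rw [hK.2.1.closure_interior_eq_closure_of_nonempty_interior hK.2.2]
      exact subset_closure hp
    obtain ⟨r, hr, hr'⟩ := mem_closure_iff.1 hcl {p | 1 / 3 < b.coord i p}
      (isOpen_lt continuous_const (hcont i)) hp3
    exact ⟨r, hr', hr⟩
  have hG : ∀ p ∈ K, b.coord 0 p = 1 / 3 → b.coord 1 p = 1 / 3 → b.coord 2 p = 1 / 3 → False := by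
    intro p hp a0 a1 a2
    obtain ⟨i, hi⟩ := hcov1 p hp
    fin_cases i <;> simp at hi <;> linarith
  have hge : ∀ p i q, q ∈ K → b.coord i p = lam * b.coord i q + (1 - lam) * (if i = i then 1 else 0)
      → 1 - lam ≤ b.coord i p := by
    intro p i q hq e
    have := mul_nonneg h0.le (hnn q hq i)
    simp at e
    linarith
  have A0 := three_aux hK h0 h1 (b.coord 0) (b.coord 1) (b.coord 2) (hcont 0) (hcont 1) (hcont 2)
    hsum (hint 0) hG (by
      intro p hp
      obtain ⟨i, q, hq, e⟩ := hcov p hp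
      fin_cases i
      · exact Or.inl ⟨q, hq, by simpa using e 0, by simpa using e 1, by simpa using e 2⟩
      · exact Or.inr (Or.inl (hge _ _ q hq (e 1)))
      · exact Or.inr (Or.inr (hge _ _ q hq (e 2))))
  have A1 := three_aux hK h0 h1 (b.coord 1) (b.coord 0) (b.coord 2) (hcont 1) (hcont 0) (hcont 2)
    (fun p => by linarith [hsum p]) (hint 1) (fun p hp a b c => hG p hp b a c) (by
      intro p hp
      obtain ⟨i, q, hq, e⟩ := hcov p hp
      fin_cases i
      · exact Or.inr (Or.inl (hge _ _ q hq (e 0)))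
      · exact Or.inl ⟨q, hq, by simpa using e 1, by simpa using e 0, by simpa using e 2⟩
      · exact Or.inr (Or.inr (hge _ _ q hq (e 2))))
  have A2 := three_aux hK h0 h1 (b.coord 2) (b.coord 0) (b.coord 1) (hcont 2) (hcont 0) (hcont 1)
    (fun p => by linarith [hsum p]) (hint 2) (fun p hp a b c => hG p hp b c a) (by
      intro p hp
      obtain ⟨i, q, hq, e⟩ := hcov p hp
      fin_cases i
      · exact Or.inr (Or.inl (hge _ _ q hq (e 0)))
      · exact Or.inr (Or.inr (hge _ _ q hq (e 1)))
      · exact Or.inl ⟨q, hq, by simpa using e 2, by simpa using e 0, by simpa using e 1⟩)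
  have hpre : IsPreconnected (interior K) := hK.2.1.interior.isPreconnected
  have ho : ∀ i j, IsOpen {p | b.coord i p < b.coord j p} := fun i j =>
    isOpen_lt (hcont i) (hcont j)
  have hS : ∀ p ∈ interior K, (b.coord 0 p < b.coord 1 p ∧ b.coord 0 p < b.coord 2 p) ∨
      (b.coord 1 p < b.coord 0 p ∧ b.coord 1 p < b.coord 2 p) ∨
      (b.coord 2 p < b.coord 0 p ∧ b.coord 2 p < b.coord 1 p) := by
    intro p hp
    have a0 := A0 p hp
    have a1 := A1 p hp
    have a2 := A2 p hp
    clear * - a0 a1 a2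
    grind
  have hd : ∀ U W : Set (Fin 2 → ℝ), IsOpen U → IsOpen W → Disjoint U W → interior K ⊆ U ∪ W →
      interior K ⊆ U ∨ interior K ⊆ W := fun U W hU hW hUW hs => by
    exact hpre.subset_or_subset hU hW hUW hs
  obtain ⟨q0, hq0, l0⟩ := hq 0
  obtain ⟨q1, hq1, l1⟩ := hq 1
  obtain ⟨q2, hq2, l2⟩ := hq 2
  rcases hd ({p | b.coord 0 p < b.coord 1 p} ∩ {p | b.coord 0 p < b.coord 2 p})
    (({p | b.coord 1 p < b.coord 0 p} ∩ {p | b.coord 1 p < b.coord 2 p}) ∪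
     ({p | b.coord 2 p < b.coord 0 p} ∩ {p | b.coord 2 p < b.coord 1 p}))
    ((ho _ _).inter (ho _ _)) (((ho _ _).inter (ho _ _)).union ((ho _ _).inter (ho _ _)))
    (Set.disjoint_left.2 (by
      rintro p ⟨u, v⟩ (⟨u', v'⟩ | ⟨u', v'⟩) <;> simp only [mem_ofPred_eq] at * <;> linarith))
    (fun p hp => hS p hp) with H | H
  · obtain ⟨u, v⟩ := H hq0
    have := hsum q0
    simp only [mem_ofPred_eq] at u v
    linarith
  · rcases hd _ _ ((ho _ _).inter (ho _ _)) ((ho _ _).inter (ho _ _))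
      (Set.disjoint_left.2 (by
        rintro p ⟨u, v⟩ ⟨u', v'⟩
        simp only [mem_ofPred_eq] at *
        linarith)) H with H | H
    · obtain ⟨u, v⟩ := H hq1
      have := hsum q1
      simp only [mem_ofPred_eq] at u v
      linarith
    · obtain ⟨u, v⟩ := H hq2
      have := hsum q2
      simp only [mem_ofPred_eq] at u v
      linarith

theorem area_bound {K : Set (Fin 2 → ℝ)} (hK : IsConvexBody K) {lam : ℝ} (h0 : 0 < lam) {m : ℕ}
    (h : CoversWith K lam m) : 1 ≤ m * lam ^ 2 := by
  obtain ⟨t, ht⟩ := h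
  have hpos : 0 < MeasureTheory.volume K :=
    (isOpen_interior.measure_pos MeasureTheory.volume hK.2.2).trans_le
      (MeasureTheory.measure_mono interior_subset)
  have hfin : MeasureTheory.volume K ≠ ⊤ := hK.1.measure_lt_top.ne
  have hpiece : ∀ i, MeasureTheory.volume ((fun x => lam • x + t i) '' K) =
      ENNReal.ofReal (lam ^ 2) * MeasureTheory.volume K := by
    intro i
    have : (fun x => lam • x + t i) '' K = (fun x => x + t i) '' (lam • K) := by
      rw [← image_smul, image_image]
    rw [this, image_add_right, MeasureTheory.measure_preimage_add_right,
      MeasureTheory.Measure.addHaar_smul]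
    simp
  have h1 : MeasureTheory.volume K ≤ m * (ENNReal.ofReal (lam ^ 2) * MeasureTheory.volume K) := by
    calc _ ≤ MeasureTheory.volume (⋃ i, (fun x => lam • x + t i) '' K) :=
          MeasureTheory.measure_mono ht
      _ ≤ ∑ i, MeasureTheory.volume ((fun x => lam • x + t i) '' K) :=
          MeasureTheory.measure_iUnion_fintype_le _ _
      _ = _ := by simp [hpiece]
  have h2 := ENNReal.toReal_mono (by finiteness) h1
  have h3 := ENNReal.toReal_pos hpos.ne' hfin
  rw [ENNReal.toReal_mul, ENNReal.toReal_mul, ENNReal.toReal_ofReal (by positivity)] at h2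
  simp at h2
  by_contra! hc
  nlinarith

theorem key {K : Set (Fin 2 → ℝ)} (hK : IsConvexBody K) {lam : ℝ} (h0 : 0 < lam) {m : ℕ}
    (hm : 0 < m) (h : CoversWith K lam m) : 1 - m / 8 ≤ lam := by
  rcases lt_or_ge m 8 with h8 | h8
  · have ha := area_bound hK h0 h
    have hl := @lt_three K hK lam h0 m hm
    interval_cases m
    · have := hl (by norm_num) h
      push_cast; linarith
    · have := hl (by norm_num) h
      push_cast; linarith
    · have := three hK h0 h
      push_cast; linarith
    all_goals
      push_cast at ha ⊢
      nlinarith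
  · have : (8 : ℝ) ≤ m := by exact_mod_cast h8
    linarith

theorem gamma_ge {K : Set (Fin 2 → ℝ)} (hK : IsConvexBody K) {m : ℕ}
    (hm : 0 < m) : 1 - m / 8 ≤ gammaC m K := by
  apply le_csInf
  · refine ⟨1, one_pos, fun _ => 0, fun x hx => mem_iUnion.2 ⟨⟨0, hm⟩, x, hx, by simp⟩⟩
  · rintro lam ⟨h0, h⟩
    exact key hK h0 hm h

theorem gamma_le {V : Type*} [NormedAddCommGroup V] [NormedSpace ℝ V] {K : Set V} {m : ℕ}
    {lam : ℝ} (h0 : 0 < lam) (h : CoversWith K lam m) : gammaC m K ≤ lam :=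
  csInf_le ⟨0, fun _ h => h.1.le⟩ ⟨h0, h⟩

theorem exists_half {K : Set (Fin 2 → ℝ)} (hK : IsConvexBody K) :
    ∃ m, 0 < m ∧ CoversWith K (1 / 2) m := by
  obtain ⟨w, hw⟩ := hK.2.2
  have hopen : ∀ t : Fin 2 → ℝ, IsOpen ((fun x => (1 / 2 : ℝ) • x + t) '' interior K) := by
    intro t
    have : (fun x => (1 / 2 : ℝ) • x + t) '' interior K =
        (fun x => x + t) '' ((1 / 2 : ℝ) • interior K) := by
      rw [← image_smul, image_image]
    rw [this]
    exact (Homeomorph.addRight t).isOpenMap _ (isOpen_interior.smul₀ (by norm_num))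
  obtain ⟨s, hs⟩ := hK.1.elim_finite_subcover _ hopen (fun x _ => mem_iUnion.2
    ⟨x - (1 / 2 : ℝ) • w, w, hw, by simp⟩)
  refine ⟨s.card, ?_, fun i => (s.equivFin.symm i : Fin 2 → ℝ), fun x hx => ?_⟩
  · rw [Finset.card_pos]
    obtain ⟨t, ht, -⟩ := mem_iUnion₂.1 (hs (interior_subset hw))
    exact ⟨t, ht⟩
  · obtain ⟨t, ht, y, hy, e⟩ := mem_iUnion₂.1 (hs hx)
    refine mem_iUnion.2 ⟨s.equivFin ⟨t, ht⟩, y, interior_subset hy, ?_⟩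
    simpa using e

theorem elem_ge {K : Set (Fin 2 → ℝ)} (hK : IsConvexBody K) {m : ℕ} (hm : 0 < m)
    (h : gammaC m K < 1) : 8 ≤ (m : ℝ) / (1 - gammaC m K) := by
  rw [le_div_iff₀ (by linarith)]
  have := gamma_ge hK hm
  linarith

theorem wcoin_ge {K : Set (Fin 2 → ℝ)} (hK : IsConvexBody K) : 8 ≤ wcoin K := by
  apply le_csInf
  · obtain ⟨m, hm, h⟩ := exists_half hK
    exact ⟨_, m, hm, (gamma_le (by norm_num) h).trans_lt (by norm_num), rfl⟩
  · rintro r ⟨m, hm, h, rfl⟩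
    exact elem_ge hK hm h

theorem sq_body : IsConvexBody (Set.Icc (0 : Fin 2 → ℝ) 1) := by
  refine ⟨isCompact_Icc, convex_Icc _ _, ⟨fun _ => 1 / 2, ?_⟩⟩
  rw [← pi_univ_Icc, interior_pi_set finite_univ]
  intro i _
  simp only [interior_Icc]
  constructor <;> norm_num

theorem sq_cov : CoversWith (Set.Icc (0 : Fin 2 → ℝ) 1) (1 / 2) 4 := by
  refine ⟨![![0, 0], ![0, 1 / 2], ![1 / 2, 0], ![1 / 2, 1 / 2]], fun x hx => ?_⟩
  have a0 := hx.1 0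
  have a1 := hx.1 1
  have b0 := hx.2 0
  have b1 := hx.2 1
  simp at a0 a1 b0 b1
  have main : ∀ t : Fin 2 → ℝ, (∀ i, t i ≤ x i ∧ x i ≤ t i + 1 / 2) →
      x ∈ (fun x => (1 / 2 : ℝ) • x + t) '' Set.Icc (0 : Fin 2 → ℝ) 1 := by
    intro t ht
    refine ⟨(2 : ℝ) • (x - t), ⟨fun i => ?_, fun i => ?_⟩, ?_⟩
    · have := ht i
      simp; linarith
    · have := ht i
      simp; linarith
    · ext i; simp
  rw [mem_iUnion]
  rcases le_total (x 0) (1 / 2) with h | h <;> rcases le_total (x 1) (1 / 2) with h' | h'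
  · exact ⟨0, main _ (by intro i; fin_cases i <;> constructor <;> simp <;> linarith)⟩
  · exact ⟨1, main _ (by intro i; fin_cases i <;> constructor <;> simp <;> linarith)⟩
  · exact ⟨2, main _ (by intro i; fin_cases i <;> constructor <;> simp <;> linarith)⟩
  · exact ⟨3, main _ (by intro i; fin_cases i <;> constructor <;> simp <;> linarith)⟩

/-- the affine square minimizes the weak covering index in the plane. -/
theorem wcoin_square_min :
    (∀ K : Set (Fin 2 → ℝ), IsConvexBody K → 8 ≤ wcoin K) ∧
    wcoin (Set.Icc (0 : Fin 2 → ℝ) 1) = 8 := by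
  refine ⟨fun K hK => wcoin_ge hK, le_antisymm ?_ (wcoin_ge sq_body)⟩
  have h := gamma_le (by norm_num) sq_cov
  have hne : gammaC 4 (Set.Icc (0 : Fin 2 → ℝ) 1) < 1 := by linarith
  have hmem : ((4 : ℕ) : ℝ) / (1 - gammaC 4 (Set.Icc (0 : Fin 2 → ℝ) 1)) ∈ {r : ℝ | ∃ m : ℕ, 0 < m ∧
      gammaC m (Set.Icc (0 : Fin 2 → ℝ) 1) < 1 ∧
      r = (m : ℝ) / (1 - gammaC m (Set.Icc (0 : Fin 2 → ℝ) 1))} := ⟨4, by norm_num, hne, rfl⟩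
  refine (csInf_le ⟨8, ?_⟩ hmem).trans ?_
  · rintro r ⟨m, hm, h, rfl⟩
    exact elem_ge sq_body hm h
  · rw [div_le_iff₀ (by linarith)]
    push_cast
    linarith
end

section
/- Let d ≥ 2, let K ⊆ ℝ^d be a convex body and let 0 < λ < 1. Then wcoin(K) ≤ N_λ(K)/(1 − λ). Moreover, if K is o-symmetric (K = −K), then N_λ(K)/(1 − λ) ≤ ((1+λ)^d/(λ^d(1−λ)))·d·(ln d + ln ln d + 5), and for an arbitrary convex body K, N_λ(K)/(1 − λ) ≤ (1/(λ^d(1−λ)))·(C(2d,d)^{1/d} − 1 + λ)^d·d·(ln d + ln ln d + 5), where C(2d,d) denotes the binomial coefficient (2d choose d). -/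
open Set Pointwise

open MeasureTheory ENNReal

lemma bm1_compact {A B : Set ℝ} (hA : IsCompact A) (hB : IsCompact B) (hA' : A.Nonempty)
    (hB' : B.Nonempty) : volume A + volume B ≤ volume (A + B) := by
  obtain ⟨a, ha, hamax⟩ := hA.exists_isMaxOn hA' continuousOn_id
  obtain ⟨b, hb, hbmin⟩ := hB.exists_isMinOn hB' continuousOn_id
  have h1 : volume ((fun x => b + x) '' A) = volume A := by
    simp [Set.image_add_left, measure_preimage_add]
  have h2 : volume ((fun x => a + x) '' B) = volume B := by
    simp [Set.image_add_left, measure_preimage_add]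
  have hd : AEDisjoint volume ((fun x => b + x) '' A) ((fun x => a + x) '' B) := by
    refine measure_mono_null (t := {a + b}) ?_ (by simp)
    rintro _ ⟨⟨x, hx, rfl⟩, ⟨y, hy, hxy⟩⟩
    have := hamax hx
    have := hbmin hy
    simp at *
    linarith
  have hm : NullMeasurableSet ((fun x => a + x) '' B) volume :=
    (hB.image (by fun_prop)).measurableSet.nullMeasurableSet
  calc volume A + volume B = volume ((fun x => b + x) '' A ∪ (fun x => a + x) '' B) := by
        rw [measure_union₀ hm hd, h1, h2]
    _ ≤ _ := by
      apply measure_mono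
      rintro _ (⟨x, hx, rfl⟩ | ⟨x, hx, rfl⟩)
      · exact ⟨x, hx, b, hb, by simp [add_comm]⟩
      · exact ⟨a, ha, x, hx, by simp [add_comm]⟩

lemma bm1 {A B : Set ℝ} (hA : MeasurableSet A) (hB : MeasurableSet B) (hA' : A.Nonempty)
    (hB' : B.Nonempty) : volume A + volume B ≤ volume (A + B) := by
  obtain ⟨a, ha⟩ := hA'
  obtain ⟨b, hb⟩ := hB'
  have key : ∀ C : Set ℝ, MeasurableSet C → volume C = ⨆ K, ⨆ (_ : K ⊆ C ∧ IsCompact K), volume K := by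
    intro C hC
    rw [hC.measure_eq_iSup_isCompact]
    simp only [iSup_and]
  rw [key A hA, key B hB]
  refine ENNReal.biSup_add_biSup_le' ⟨∅, by simp⟩ ⟨∅, by simp⟩ ?_
  rintro K ⟨hK, hKc⟩ L ⟨hL, hLc⟩
  calc volume K + volume L ≤ volume (K ∪ {a}) + volume (L ∪ {b}) := by
        gcongr <;> simp
    _ ≤ volume ((K ∪ {a}) + (L ∪ {b})) :=
        bm1_compact (hKc.union isCompact_singleton) (hLc.union isCompact_singleton)
          (by simp) (by simp)
    _ ≤ _ := by
        apply measure_mono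
        apply Set.add_subset_add <;> simp [insert_subset_iff, *]

lemma bm1' {A B C : Set ℝ} (hA : MeasurableSet A) (hB : MeasurableSet B) (hA' : A.Nonempty)
    (hB' : B.Nonempty) {t : ℝ} (ht0 : 0 < t) (ht1 : t < 1)
    (h : ∀ x ∈ A, ∀ y ∈ B, (1 - t) * x + t * y ∈ C) :
    ENNReal.ofReal (1 - t) * volume A + ENNReal.ofReal t * volume B ≤ volume C := by
  have h1 : volume ((1 - t) • A) = ENNReal.ofReal (1 - t) * volume A := by
    rw [Measure.addHaar_smul]; simp [abs_of_pos (sub_pos.2 ht1)]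
  have h2 : volume (t • B) = ENNReal.ofReal t * volume B := by
    rw [Measure.addHaar_smul]; simp [abs_of_pos ht0]
  rw [← h1, ← h2]
  refine (bm1 (hA.const_smul₀ _) (hB.const_smul₀ _) (hA'.smul_set) (hB'.smul_set)).trans ?_
  apply measure_mono
  rintro _ ⟨_, ⟨x, hx, rfl⟩, _, ⟨y, hy, rfl⟩, rfl⟩
  simpa using h x hx y hy

lemma pl1_real {f g h : ℝ → ℝ} (hf : Measurable f) (hg : Measurable g) (hh : Measurable h)
    (f0 : ∀ x, 0 ≤ f x) (g0 : ∀ x, 0 ≤ g x) (h0 : ∀ x, 0 ≤ h x)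
    (f1 : ∀ x, f x ≤ 1) (g1 : ∀ x, g x ≤ 1)
    (fs : ∀ s < 1, ∃ x, s < f x) (gs : ∀ s < 1, ∃ x, s < g x)
    {t : ℝ} (ht0 : 0 < t) (ht1 : t < 1)
    (H : ∀ s, 0 < s → ∀ x y, s < f x → s < g y → s < h ((1 - t) * x + t * y)) :
    ENNReal.ofReal (1 - t) * (∫⁻ x, ENNReal.ofReal (f x)) +
      ENNReal.ofReal t * (∫⁻ x, ENNReal.ofReal (g x)) ≤ ∫⁻ x, ENNReal.ofReal (h x) := by
  rw [lintegral_eq_lintegral_meas_lt _ (.of_forall f0) hf.aemeasurable,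
    lintegral_eq_lintegral_meas_lt _ (.of_forall g0) hg.aemeasurable,
    lintegral_eq_lintegral_meas_lt _ (.of_forall h0) hh.aemeasurable,
    ← lintegral_const_mul' _ _ (by simp), ← lintegral_const_mul' _ _ (by simp)]
  refine (le_lintegral_add _ _).trans ?_
  refine setLIntegral_mono' measurableSet_Ioi ?_
  intro s hs
  have hs : 0 < s := hs
  rcases lt_or_ge s 1 with h1 | h1
  · exact bm1' (measurableSet_lt measurable_const hf) (measurableSet_lt measurable_const hg)
      (fs s h1) (gs s h1) ht0 ht1 (fun x hx y hy => H s hs x y hx hy)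
  · have e1 : {a | s < f a} = ∅ := by
      ext x; simp; linarith [f1 x]
    have e2 : {a | s < g a} = ∅ := by
      ext x; simp; linarith [g1 x]
    simp [e1, e2]

lemma pl1_norm {f g h : ℝ → ℝ≥0∞} (hf : Measurable f) (hg : Measurable g) (hh : Measurable h)
    (fs : ⨆ x, f x = 1) (gs : ⨆ x, g x = 1)
    {t : ℝ} (ht0 : 0 < t) (ht1 : t < 1)
    (H : ∀ x y, f x ^ (1 - t) * g y ^ t ≤ h ((1 - t) * x + t * y)) :
    ENNReal.ofReal (1 - t) * (∫⁻ x, f x) + ENNReal.ofReal t * (∫⁻ x, g x) ≤ ∫⁻ x, h x := by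
  have f1 : ∀ x, f x ≤ 1 := fun x => fs ▸ le_iSup f x
  have g1 : ∀ x, g x ≤ 1 := fun x => gs ▸ le_iSup g x
  have ft : ∀ x, f x ≠ ⊤ := fun x => ((f1 x).trans_lt one_lt_top).ne
  have gt : ∀ x, g x ≠ ⊤ := fun x => ((g1 x).trans_lt one_lt_top).ne
  have ht : ∀ x, min (h x) 1 ≠ ⊤ := fun x => ((min_le_right _ _).trans_lt one_lt_top).ne
  have sup : ∀ f : ℝ → ℝ≥0∞, (∀ x, f x ≠ ⊤) → ⨆ x, f x = 1 → ∀ s < 1, ∃ x, s < (f x).toReal := by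
    intro f ft fs s hs
    have : ENNReal.ofReal s < ⨆ x, f x := by rw [fs]; simpa using hs
    obtain ⟨x, hx⟩ := lt_iSup_iff.1 this
    refine ⟨x, ?_⟩
    rw [← ofReal_toReal (ft x)] at hx
    exact (ofReal_lt_ofReal_iff').1 hx |>.1
  have := pl1_real (f := fun x => (f x).toReal) (g := fun x => (g x).toReal)
    (h := fun x => (min (h x) 1).toReal) hf.ennreal_toReal hg.ennreal_toReal
    (hh.min measurable_const).ennreal_toReal (by simp) (by simp) (by simp)
    (fun x => by simpa using toReal_mono one_ne_top (f1 x))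
    (fun x => by simpa using toReal_mono one_ne_top (g1 x))
    (sup f ft fs) (sup g gt gs) ht0 ht1 ?_
  · simp only [ofReal_toReal (ft _), ofReal_toReal (gt _), ofReal_toReal (ht _)] at this
    exact this.trans (lintegral_mono fun x => min_le_left _ _)
  · intro s hs x y hx hy
    rw [← ofReal_lt_iff_lt_toReal hs.le (ft _)] at hx
    rw [← ofReal_lt_iff_lt_toReal hs.le (gt _)] at hy
    rw [← ofReal_lt_iff_lt_toReal hs.le (ht _)]
    have e : f x ^ (1 - t) * g y ^ t ≤ min (h ((1 - t) * x + t * y)) 1 := by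
      refine le_min (H x y) ?_
      exact mul_le_one' (rpow_le_one (f1 x) (by linarith)) (rpow_le_one (g1 y) (by linarith))
    refine lt_of_lt_of_le ?_ e
    calc ENNReal.ofReal s = ENNReal.ofReal s ^ (1 - t) * ENNReal.ofReal s ^ t := by
          rw [← ENNReal.rpow_add _ _ (by simpa using hs) (by simp)]; simp
      _ < _ := by
        apply ENNReal.mul_lt_mul
        · exact rpow_lt_rpow hx (by linarith)
        · exact rpow_lt_rpow hy (by linarith)

lemma amgm {a b : ℝ≥0∞} {t : ℝ} (ht0 : 0 < t) (ht1 : t < 1) :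
    a ^ (1 - t) * b ^ t ≤ ENNReal.ofReal (1 - t) * a + ENNReal.ofReal t * b := by
  have h1 : 0 < 1 - t := by linarith
  have hc : (1 - t)⁻¹.HolderConjugate t⁻¹ := by
    rw [Real.holderConjugate_iff]
    constructor
    · exact (one_lt_inv₀ h1).2 (by linarith)
    · simp
  have := ENNReal.young_inequality (a ^ (1 - t)) (b ^ t) hc
  rw [← rpow_mul, ← rpow_mul, mul_inv_cancel₀ h1.ne', mul_inv_cancel₀ ht0.ne', rpow_one, rpow_one,
    ofReal_inv_of_pos h1, ofReal_inv_of_pos ht0, div_eq_mul_inv, div_eq_mul_inv, inv_inv, inv_inv,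
    mul_comm a, mul_comm b] at this
  exact this

lemma pl1_bdd {f g h : ℝ → ℝ≥0∞} (hf : Measurable f) (hg : Measurable g) (hh : Measurable h)
    (fs : ⨆ x, f x ≠ ⊤) (gs : ⨆ x, g x ≠ ⊤)
    {t : ℝ} (ht0 : 0 < t) (ht1 : t < 1)
    (H : ∀ x y, f x ^ (1 - t) * g y ^ t ≤ h ((1 - t) * x + t * y)) :
    (∫⁻ x, f x) ^ (1 - t) * (∫⁻ x, g x) ^ t ≤ ∫⁻ x, h x := by
  have h1 : 0 < 1 - t := by linarith
  by_cases fz : ⨆ x, f x = 0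
  · have : ∀ x, f x = 0 := by simpa using fz
    simp [this, h1]
  by_cases gz : ⨆ x, g x = 0
  · have : ∀ x, g x = 0 := by simpa using gz
    simp [this, ht0]
  set a := ⨆ x, f x with ha
  set b := ⨆ x, g x with hb
  have ha' : a⁻¹ ≠ ⊤ := by simpa using fz
  have hb' : b⁻¹ ≠ ⊤ := by simpa using gz
  have hap : a ^ (1 - t) ≠ 0 := by simp [fz, fs]
  have hbp : b ^ t ≠ 0 := by simp [gz, gs]
  have hap' : a ^ (1 - t) ≠ ⊤ := by simp [fz, fs]
  have hbp' : b ^ t ≠ ⊤ := by simp [gz, gs]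
  have := pl1_norm (f := fun x => a⁻¹ * f x) (g := fun x => b⁻¹ * g x)
    (h := fun x => (a⁻¹) ^ (1 - t) * (b⁻¹) ^ t * h x) (hf.const_mul _) (hg.const_mul _) (hh.const_mul _)
    (by rw [← ENNReal.mul_iSup, ← ha, ENNReal.inv_mul_cancel fz fs])
    (by rw [← ENNReal.mul_iSup, ← hb, ENNReal.inv_mul_cancel gz gs]) ht0 ht1
    (by
      intro x y
      rw [ENNReal.mul_rpow_of_nonneg _ _ h1.le, ENNReal.mul_rpow_of_nonneg _ _ ht0.le,
        mul_mul_mul_comm]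
      gcongr
      exact H x y)
  have h2 := (amgm ht0 ht1).trans this
  rw [lintegral_const_mul _ hf, lintegral_const_mul _ hg, lintegral_const_mul _ hh,
    ENNReal.mul_rpow_of_nonneg _ _ h1.le, ENNReal.mul_rpow_of_nonneg _ _ ht0.le,
        mul_mul_mul_comm] at h2
  rw [ENNReal.inv_rpow, ENNReal.inv_rpow] at h2
  rwa [ENNReal.mul_le_mul_iff_right] at h2
  · simp [hap', hbp']
  · exact ENNReal.mul_ne_top (by simp [hap]) (by simp [hbp])

lemma lintegral_trunc {f : ℝ → ℝ≥0∞} (hf : Measurable f) :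
    Filter.Tendsto (fun N : ℕ => ∫⁻ x, min (f x) N) Filter.atTop (nhds (∫⁻ x, f x)) := by
  have hm : Monotone (fun (N : ℕ) x => min (f x) (N : ℝ≥0∞)) := by
    intro a b hab x
    exact min_le_min le_rfl (by simpa using hab)
  have : ∀ x, ⨆ N : ℕ, min (f x) (N : ℝ≥0∞) = f x := by
    intro x
    rw [← inf_iSup_eq, ENNReal.iSup_natCast, inf_top_eq]
  have e : ∫⁻ x, f x = ⨆ N : ℕ, ∫⁻ x, min (f x) N := by
    rw [← lintegral_iSup (fun N => hf.min measurable_const) hm]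
    simp [this]
  rw [e]
  exact tendsto_atTop_iSup fun a b hab => lintegral_mono (hm hab)

lemma pl1 {f g h : ℝ → ℝ≥0∞} (hf : Measurable f) (hg : Measurable g) (hh : Measurable h)
    {t : ℝ} (ht0 : 0 < t) (ht1 : t < 1)
    (H : ∀ x y, f x ^ (1 - t) * g y ^ t ≤ h ((1 - t) * x + t * y)) :
    (∫⁻ x, f x) ^ (1 - t) * (∫⁻ x, g x) ^ t ≤ ∫⁻ x, h x := by
  have h1 : 0 < 1 - t := by linarith
  by_cases fz : ∫⁻ x, f x = 0
  · simp [fz, h1]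
  by_cases gz : ∫⁻ x, g x = 0
  · simp [gz, ht0]
  have T := ENNReal.Tendsto.mul ((ENNReal.continuous_rpow_const (y := 1 - t)).tendsto _ |>.comp (lintegral_trunc hf))
    (Or.inl (by simp [fz, h1, h1.le, h1.not_gt]))
    ((ENNReal.continuous_rpow_const (y := t)).tendsto _ |>.comp (lintegral_trunc hg))
    (Or.inl (by simp [gz, ht0, ht0.le, ht0.not_gt]))
  refine le_of_tendsto' T fun N => ?_
  have bd : ∀ f : ℝ → ℝ≥0∞, ⨆ x, min (f x) (N : ℝ≥0∞) ≠ ⊤ := fun f =>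
    ((iSup_le fun x => min_le_right _ _).trans_lt (natCast_lt_top N)).ne
  refine pl1_bdd (hf.min measurable_const) (hg.min measurable_const) hh (bd f) (bd g) ht0 ht1 ?_
  intro x y
  refine le_trans ?_ (H x y)
  gcongr <;> exact min_le_left _ _

lemma pln (n : ℕ) {t : ℝ} (ht0 : 0 < t) (ht1 : t < 1) : ∀ {f g h : (Fin n → ℝ) → ℝ≥0∞}
    (_ : Measurable f) (_ : Measurable g) (_ : Measurable h)
    (_ : ∀ x y, f x ^ (1 - t) * g y ^ t ≤ h ((1 - t) • x + t • y)),
    (∫⁻ x, f x) ^ (1 - t) * (∫⁻ x, g x) ^ t ≤ ∫⁻ x, h x := by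
  induction n with
  | zero =>
    intro f g h hf hg hh H
    simp only [Measure.volume_pi_eq_dirac 0, lintegral_dirac]
    have := H 0 0
    simpa using this
  | succ n ih =>
    intro f g h hf hg hh H
    let e := (MeasurableEquiv.piFinSuccAbove (fun _ : Fin (n + 1) => ℝ) 0).symm
    have he : MeasurePreserving e volume volume :=
      (volume_preserving_piFinSuccAbove (fun _ : Fin (n + 1) => ℝ) 0).symm
    have hi : ∀ f : (Fin (n + 1) → ℝ) → ℝ≥0∞, Measurable f → ∫⁻ x, f x = ∫⁻ s, ∫⁻ z, f (e (s, z)) := by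
      intro f hf
      rw [← he.lintegral_comp hf]
      exact lintegral_prod _ (hf.comp e.measurable).aemeasurable
    have hm : ∀ f : (Fin (n + 1) → ℝ) → ℝ≥0∞, Measurable f → Measurable (fun s => ∫⁻ z, f (e (s, z))) := by
      intro f hf
      exact Measurable.lintegral_prod_right' (f := fun p => f (e p)) (hf.comp e.measurable)
    rw [hi f hf, hi g hg, hi h hh]
    refine pl1 (hm f hf) (hm g hg) (hm h hh) ht0 ht1 ?_
    intro s u
    refine ih (hf.comp (e.measurable.comp measurable_prodMk_left))
      (hg.comp (e.measurable.comp measurable_prodMk_left))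
      (hh.comp (e.measurable.comp measurable_prodMk_left)) ?_
    intro x y
    refine (H (e (s, x)) (e (u, y))).trans_eq ?_
    change h _ = h _
    congr 1
    funext i
    refine Fin.cases ?_ (fun j => ?_) i <;> simp [e, MeasurableEquiv.piFinSuccAbove]

lemma bmn {n : ℕ} {t : ℝ} (ht0 : 0 < t) (ht1 : t < 1) {A B C : Set (Fin n → ℝ)}
    (hA : MeasurableSet A) (hB : MeasurableSet B) (hC : MeasurableSet C)
    (h : ∀ x ∈ A, ∀ y ∈ B, (1 - t) • x + t • y ∈ C) :
    volume A ^ (1 - t) * volume B ^ t ≤ volume C := by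
  have h1 : 0 < 1 - t := by linarith
  have := pln n ht0 ht1 (f := A.indicator 1) (g := B.indicator 1) (h := C.indicator 1)
    (measurable_one.indicator hA) (measurable_one.indicator hB) (measurable_one.indicator hC) ?_
  · simpa [lintegral_indicator_one, hA, hB, hC] using this
  · intro x y
    by_cases hx : x ∈ A <;> by_cases hy : y ∈ B <;> simp [hx, hy, h1, ht0]
    rw [Set.indicator_of_mem (h x hx y hy)]; simp

lemma vol_smul {d : ℕ} {r : ℝ} (hr : 0 ≤ r) (A : Set (Fin d → ℝ)) :
    volume (r • A) = ENNReal.ofReal (r ^ d) * volume A := by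
  rw [Measure.addHaar_smul]; simp [abs_of_nonneg hr]

lemma volr_smul {d : ℕ} {r : ℝ} (hr : 0 ≤ r) (A : Set (Fin d → ℝ)) :
    volume.real (r • A) = r ^ d * volume.real A := by
  rw [measureReal_def, vol_smul hr, ENNReal.toReal_mul, ENNReal.toReal_ofReal (by positivity)]; rfl

lemma bm_add {d : ℕ} (hd : d ≠ 0) {A B : Set (Fin d → ℝ)} (hA : IsCompact A) (hB : IsCompact B)
    (hA0 : 0 < volume.real A) (hB0 : 0 < volume.real B) :
    volume.real A ^ ((1 : ℝ) / d) + volume.real B ^ ((1 : ℝ) / d) ≤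
      volume.real (A + B) ^ ((1 : ℝ) / d) := by
  set a := volume.real A ^ ((1 : ℝ) / d) with ha
  set b := volume.real B ^ ((1 : ℝ) / d) with hb
  have ha0 : 0 < a := by positivity
  have hb0 : 0 < b := by positivity
  have had : a ^ d = volume.real A := by
    rw [ha, one_div, Real.rpow_inv_natCast_pow hA0.le hd]
  have hbd : b ^ d = volume.real B := by
    rw [hb, one_div, Real.rpow_inv_natCast_pow hB0.le hd]
  have e : ∀ (C : Set (Fin d → ℝ)) (c : ℝ), IsCompact C → 0 < c → c ^ d = volume.real C →
      volume (c⁻¹ • C) = 1 := by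
    intro C c hC hc h
    rw [vol_smul (by positivity), ← ofReal_toReal hC.measure_lt_top.ne, ← measureReal_def, ← h,
      ← ENNReal.ofReal_mul (by positivity), ← mul_pow, inv_mul_cancel₀ hc.ne']
    simp
  have hAB : IsCompact (A + B) := hA.add hB
  have key := bmn (t := b / (a + b)) (by positivity) ((div_lt_one (by positivity)).2 (by linarith))
    (A := a⁻¹ • A) (B := b⁻¹ • B) (C := (a + b)⁻¹ • (A + B)) (hA.smul _).measurableSet
    (hB.smul _).measurableSet (hAB.smul _).measurableSet (by
      rintro _ ⟨x, hx, rfl⟩ _ ⟨y, hy, rfl⟩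
      refine ⟨x + y, Set.add_mem_add hx hy, ?_⟩
      simp only [smul_smul, smul_add]
      congr 2 <;> field_simp
      ring)
  rw [e A a hA ha0 had, e B b hB hb0 hbd, vol_smul (by positivity),
    ← ofReal_toReal hAB.measure_lt_top.ne, ← measureReal_def,
      ← ENNReal.ofReal_mul (by positivity)] at key
  simp only [ENNReal.one_rpow, mul_one, ENNReal.one_le_ofReal] at key
  have k2 : (a + b) ^ d ≤ volume.real (A + B) := by
    rw [inv_pow] at key
    rwa [← div_eq_inv_mul, one_le_div (by positivity)] at key
  rw [one_div, Real.le_rpow_inv_iff_of_pos (by positivity) (by positivity) (by positivity)]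
  simpa using k2

lemma fub_meas {d : ℕ} {E L : Set (Fin d → ℝ)} (hE : MeasurableSet E) (hL : MeasurableSet L) :
    MeasurableSet {q : (Fin d → ℝ) × (Fin d → ℝ) | q.2 ∈ E ∧ q.2 - q.1 ∈ L} :=
  (measurable_snd hE).inter ((measurable_snd.sub measurable_fst) hL)

lemma fub_measurable {d : ℕ} {E L : Set (Fin d → ℝ)} (hE : MeasurableSet E) (hL : MeasurableSet L) :
    Measurable (fun x : Fin d → ℝ => volume {p | p ∈ E ∧ p - x ∈ L}) :=
  measurable_measure_prodMk_left (fub_meas hE hL)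

lemma fub {d : ℕ} {E L : Set (Fin d → ℝ)} (hE : MeasurableSet E) (hL : MeasurableSet L) :
    ∫⁻ x : Fin d → ℝ, volume {p | p ∈ E ∧ p - x ∈ L} = volume E * volume L := by
  have h1 := Measure.prod_apply (μ := (volume : Measure (Fin d → ℝ))) (ν := (volume : Measure (Fin d → ℝ))) (fub_meas hE hL)
  rw [Measure.prod_apply_symm (fub_meas hE hL)] at h1
  refine h1.symm.trans ?_
  have : ∀ p : Fin d → ℝ, volume ((fun x => (x, p)) ⁻¹' {q : (Fin d → ℝ) × (Fin d → ℝ) | q.2 ∈ E ∧ q.2 - q.1 ∈ L})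
      = E.indicator (fun _ => volume L) p := by
    intro p
    by_cases hp : p ∈ E
    · simp only [preimage_setOf_eq, hp, true_and, indicator_of_mem]
      have := (Measure.measurePreserving_sub_left (volume : Measure (Fin d → ℝ)) p).measure_preimage hL.nullMeasurableSet
      exact this
    · simp [hp]
  simp_rw [this]
  rw [lintegral_indicator hE]
  simp [mul_comm]

lemma beta_int (a b : ℕ) : ∫ t in (0 : ℝ)..1, t ^ a * (1 - t) ^ b =
    (a.factorial * b.factorial : ℝ) / (a + b + 1).factorial := by
  induction a generalizing b with
  | zero =>
    have : ∫ t in (0 : ℝ)..1, (1 - t) ^ b = ∫ t in (0 : ℝ)..1, t ^ b := by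
      rw [intervalIntegral.integral_comp_sub_left (fun t => t ^ b)]; simp
    simp only [pow_zero, one_mul, this, integral_pow]
    rw [zero_add, Nat.factorial_succ]
    have := Nat.factorial_ne_zero b
    push_cast
    field_simp
    simp
  | succ a ih =>
    have h := intervalIntegral.integral_mul_deriv_eq_deriv_mul (a := (0 : ℝ)) (b := 1)
      (u := fun t => t ^ (a + 1)) (u' := fun t => ((a + 1 : ℕ) : ℝ) * t ^ a)
      (v := fun t => - (1 - t) ^ (b + 1) / (b + 1)) (v' := fun t => (1 - t) ^ b)
      (fun x _ => by simpa using hasDerivAt_pow (a + 1) x)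
      (fun x _ => by
        have := (((hasDerivAt_id x).const_sub 1).pow (b + 1)).neg.div_const ((b : ℝ) + 1)
        refine HasDerivAt.congr_deriv this ?_
        have : (b : ℝ) + 1 ≠ 0 := by positivity
        simp only [id, Nat.add_sub_cancel]
        push_cast
        field_simp)
      (by apply Continuous.intervalIntegrable; fun_prop)
      (by apply Continuous.intervalIntegrable; fun_prop)
    rw [h]
    have e : ∀ x : ℝ, ((a + 1 : ℕ) : ℝ) * x ^ a * (-(1 - x) ^ (b + 1) / (b + 1)) =
      (-((a + 1 : ℕ) : ℝ) / (b + 1)) * (x ^ a * (1 - x) ^ (b + 1)) := by intro x; ring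
    simp_rw [e]
    rw [intervalIntegral.integral_const_mul, ih (b + 1)]
    have h1 : a + 1 + b + 1 = a + (b + 1) + 1 := by ring
    rw [h1]
    have := Nat.factorial_ne_zero (a + (b + 1) + 1)
    have : (b : ℝ) + 1 ≠ 0 := by positivity
    rw [Nat.factorial_succ a, Nat.factorial_succ b]
    push_cast
    field_simp
    simp

lemma beta_choose {d : ℕ} (hd : d ≠ 0) : ∫ t in (0 : ℝ)..1, (1 - t) ^ d * (d * t ^ (d - 1)) =
    1 / ((2 * d).choose d : ℝ) := by
  have e : ∀ t : ℝ, (1 - t) ^ d * (d * t ^ (d - 1)) = d * (t ^ (d - 1) * (1 - t) ^ d) := by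
    intro t; ring
  simp_rw [e]
  rw [intervalIntegral.integral_const_mul, beta_int]
  have h := Nat.choose_mul_factorial_mul_factorial (n := 2 * d) (k := d) (by omega)
  have h2 : 2 * d - d = d := by omega
  rw [h2] at h
  have h3 : d - 1 + d + 1 = 2 * d := by omega
  rw [h3, ← h]
  have h4 : (d : ℝ) * ((d - 1).factorial : ℝ) = d.factorial := by
    exact_mod_cast Nat.mul_factorial_pred hd
  rw [← mul_div_assoc, ← mul_assoc, h4]
  have := Nat.factorial_ne_zero d
  have : (2 * d).choose d ≠ 0 := (Nat.choose_pos (by omega)).ne'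
  push_cast
  field_simp

lemma isCompact_sub' {d : ℕ} {A B : Set (Fin d → ℝ)} (hA : IsCompact A) (hB : IsCompact B) :
    IsCompact (A - B) := by
  rw [sub_eq_add_neg]; exact hA.add hB.neg

lemma rs_slice {d : ℕ} {K : Set (Fin d → ℝ)} (hK : Convex ℝ K) {r : ℝ} (hr0 : 0 ≤ r) (hr1 : r ≤ 1)
    {x : Fin d → ℝ} (hx : x ∈ r • (K - K)) :
    ENNReal.ofReal ((1 - r) ^ d) * volume K ≤ volume {p | p ∈ K ∧ p - x ∈ K} := by
  obtain ⟨_, ⟨a, ha, b, hb, rfl⟩, rfl⟩ := hx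
  rw [← vol_smul (by linarith), ← measure_preimage_add volume (-(r • a)) ((1 - r) • K)]
  apply measure_mono
  rintro p ⟨k, hk, hkp⟩
  simp only at hkp
  have e : p = (1 - r) • k + r • a := by rw [hkp]; abel
  refine ⟨?_, ?_⟩
  · rw [e]; exact hK hk ha (by linarith) hr0 (by ring)
  · have : p - r • (a - b) = (1 - r) • k + r • b := by rw [e, smul_sub]; abel
    change p - r • (a - b) ∈ K
    rw [this]; exact hK hk hb (by linarith) hr0 (by ring)

lemma rogers_shephard {d : ℕ} (hd : d ≠ 0) {K : Set (Fin d → ℝ)} (hK : Convex ℝ K)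
    (hc : IsCompact K) (hv : 0 < volume.real K) :
    volume.real (K - K) ≤ (2 * d).choose d * volume.real K := by
  have hvt : volume K ≠ ⊤ := hc.measure_lt_top.ne
  have hD : IsCompact (K - K) := isCompact_sub' hc hc
  have hDt : volume (K - K) ≠ ⊤ := hD.measure_lt_top.ne
  let G : (Fin d → ℝ) → ℝ≥0∞ := fun x => volume {p | p ∈ K ∧ p - x ∈ K}
  have hG : Measurable G := fub_measurable hc.measurableSet hc.measurableSet
  have hGt : ∀ x, G x ≠ ⊤ := fun x => ((measure_mono (fun p hp => hp.1)).trans_lt hc.measure_lt_top).ne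
  let f : (Fin d → ℝ) → ℝ := fun x => ((G x).toReal / volume.real K) ^ ((1 : ℝ) / d)
  have hf0 : ∀ x, 0 ≤ f x := fun x => by positivity
  have hfm : Measurable f := (hG.ennreal_toReal.div_const _).pow_const _
  have hfd : ∀ x, f x ^ d = (G x).toReal / volume.real K := fun x => by
    simp only [f]
    rw [one_div, Real.rpow_inv_natCast_pow (by positivity) hd]
  have lc := lintegral_comp_eq_lintegral_meas_le_mul (volume : Measure (Fin d → ℝ)) (f := f)
    (g := fun t => d * t ^ (d - 1)) (.of_forall hf0) hfm.aemeasurable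
    (fun t _ => by apply Continuous.intervalIntegrable; fun_prop)
    (by
      filter_upwards [ae_restrict_mem measurableSet_Ioi] with t ht
      have : (0 : ℝ) < t := ht
      positivity)
  have i1 : ∀ x, ∫ t in (0 : ℝ)..f x, (d : ℝ) * t ^ (d - 1) = f x ^ d := by
    intro x
    rw [intervalIntegral.integral_const_mul, integral_pow]
    have h1 : d - 1 + 1 = d := by omega
    have h2 : ((d - 1 : ℕ) : ℝ) + 1 = d := by exact_mod_cast h1
    have h3 : (d : ℝ) ≠ 0 := by exact_mod_cast hd
    rw [h1, h2, zero_pow hd]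
    field_simp
    simp
  simp_rw [i1, hfd] at lc
  have lhs : ∫⁻ x, ENNReal.ofReal ((G x).toReal / volume.real K) = volume K := by
    have : ∀ x, ENNReal.ofReal ((G x).toReal / volume.real K) = G x / volume K := by
      intro x
      rw [ENNReal.ofReal_div_of_pos hv, ofReal_toReal (hGt x), measureReal_def, ofReal_toReal hvt]
    simp_rw [this, div_eq_mul_inv]
    have hv0 : volume K ≠ 0 := by
      intro h; simp [measureReal_def, h] at hv
    rw [lintegral_mul_const _ hG, fub hc.measurableSet hc.measurableSet, mul_assoc,
      ENNReal.mul_inv_cancel hv0 hvt, mul_one]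
  rw [lhs] at lc
  have rhs : volume (K - K) * ENNReal.ofReal (1 / ((2 * d).choose d : ℝ)) ≤ volume K := by
    rw [lc, ← beta_choose hd, intervalIntegral.integral_of_le zero_le_one,
      ofReal_integral_eq_lintegral_ofReal, ← lintegral_const_mul]
    · refine (setLIntegral_mono' measurableSet_Ioc ?_).trans
        (lintegral_mono_set (s := Ioc 0 1) (t := Ioi 0) (fun x hx => hx.1))
      rintro t ⟨ht0, ht1⟩
      have ht1' : 0 ≤ 1 - t := by linarith
      rw [ENNReal.ofReal_mul (by positivity), ← mul_assoc]
      gcongr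
      rw [mul_comm, ← vol_smul (by linarith)]
      apply measure_mono
      intro x hx
      have := rs_slice hK (by linarith) (by linarith) hx
      rw [_root_.sub_sub_cancel, ← ofReal_toReal hvt, ← ENNReal.ofReal_mul (by positivity),
        ofReal_le_iff_le_toReal (hGt x)] at this
      change t ≤ f x
      refine le_of_pow_le_pow_left₀ hd (hf0 x) ?_
      rw [hfd, le_div_iff₀ hv]
      exact this
    · fun_prop
    · exact (Continuous.integrableOn_Icc (by fun_prop)).mono_set Ioc_subset_Icc_self
    · filter_upwards [ae_restrict_mem measurableSet_Ioc] with t ht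
      have : (0 : ℝ) < t := ht.1
      have : 0 ≤ 1 - t := by linarith [ht.2]
      simp only [Pi.zero_apply]
      positivity
  have hC : (0 : ℝ) < (2 * d).choose d := by exact_mod_cast Nat.choose_pos (by omega)
  have := ENNReal.toReal_mono hvt rhs
  rw [ENNReal.toReal_mul, toReal_ofReal (by positivity)] at this
  rw [measureReal_def, measureReal_def]
  field_simp at this
  exact this

lemma vol_diff_le {d : ℕ} (hd : d ≠ 0) {K : Set (Fin d → ℝ)} (hK : Convex ℝ K)
    (hc : IsCompact K) (hv : 0 < volume.real K) {lam : ℝ} (h0 : 0 < lam) (h1 : lam < 1) :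
    volume.real (K - lam • K) ≤
      (((Nat.choose (2 * d) d : ℝ) ^ ((1 : ℝ) / d) - 1 + lam) ^ d) * volume.real K := by
  have hne : K.Nonempty := by
    rw [Set.nonempty_iff_ne_empty]; rintro rfl; simp at hv
  obtain ⟨k, hk⟩ := hne
  have hcl : IsCompact (lam • K) := hc.smul lam
  have hA : IsCompact (K - lam • K) := isCompact_sub' hc hcl
  have hB : IsCompact ((1 - lam) • (-K)) := hc.neg.smul (1 - lam)
  have hBv : volume.real ((1 - lam) • (-K)) = (1 - lam) ^ d * volume.real K := by
    rw [volr_smul (by linarith), measureReal_def, Measure.measure_neg, measureReal_def]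
  have hAv : volume.real K ≤ volume.real (K - lam • K) := by
    rw [measureReal_def, measureReal_def]
    refine ENNReal.toReal_mono hA.measure_lt_top.ne ?_
    rw [← measure_preimage_add volume (lam • k) K]
    refine measure_mono fun p hp => ⟨_, hp, lam • k, smul_mem_smul_set hk, by simp⟩
  have h1' : 0 < 1 - lam := by linarith
  have bm := bm_add hd hA hB (by linarith) (by rw [hBv]; positivity)
  have hsub : K - lam • K + (1 - lam) • (-K) ⊆ K - K := by
    rintro _ ⟨_, ⟨a, ha, _, ⟨b, hb, rfl⟩, rfl⟩, _, ⟨c, hc, rfl⟩, rfl⟩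
    refine ⟨a, ha, lam • b + (1 - lam) • (-c), hK hb hc h0.le h1'.le (by ring), ?_⟩
    simp
    abel
  have hm : volume.real (K - lam • K + (1 - lam) • (-K)) ≤ (2 * d).choose d * volume.real K :=
    (measureReal_mono hsub (isCompact_sub' hc hc).measure_lt_top.ne).trans (rogers_shephard hd hK hc hv)
  have hm2 := bm.trans (Real.rpow_le_rpow (by positivity) hm (by positivity : 0 ≤ (1 : ℝ) / d))
  rw [hBv, Real.mul_rpow (by positivity) hv.le, Real.mul_rpow (by positivity) hv.le, one_div,
    Real.pow_rpow_inv_natCast h1'.le hd] at hm2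
  rw [one_div]
  set a := volume.real (K - lam • K) ^ ((d : ℝ)⁻¹) with ha
  have had : a ^ d = volume.real (K - lam • K) := by
    rw [ha, Real.rpow_inv_natCast_pow (by linarith) hd]
  set b := volume.real K ^ ((d : ℝ)⁻¹) with hb
  have hbd : b ^ d = volume.real K := by
    rw [hb, Real.rpow_inv_natCast_pow (by linarith) hd]
  rw [← had, ← hbd, ← mul_pow]
  have : 0 ≤ a := by positivity
  gcongr
  linarith

lemma greedy_step {d : ℕ} {E L U : Set (Fin d → ℝ)} (hE : MeasurableSet E) (hL : MeasurableSet L)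
    (hUm : MeasurableSet U) (hEt : volume E ≠ ⊤) (hLt : volume L ≠ ⊤) (hUt : volume U ≠ ⊤)
    (hU0 : volume U ≠ 0) (hU : ∀ p ∈ E, ∀ l ∈ L, p - l ∈ U) :
    ∃ x, volume.real L / volume.real U * volume.real E ≤ volume.real {p | p ∈ E ∧ p - x ∈ L} := by
  have h1 : ∫⁻ x in U, volume {p | p ∈ E ∧ p - x ∈ L} = volume E * volume L := by
    rw [← fub hE hL, setLIntegral_eq_of_support_subset]
    intro x hx
    have : {p | p ∈ E ∧ p - x ∈ L}.Nonempty := by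
      rw [Set.nonempty_iff_ne_empty]
      intro h
      simp [h] at hx
    obtain ⟨p, hp, hl⟩ := this
    simpa using hU p hp _ hl
  obtain ⟨x, -, hx⟩ := exists_setLAverage_le (μ := volume) hU0 hUm.nullMeasurableSet
    (f := fun x => volume {p | p ∈ E ∧ p - x ∈ L}) (by rw [h1]; exact ENNReal.mul_ne_top hEt hLt)
  refine ⟨x, ?_⟩
  rw [setLAverage_eq, h1] at hx
  have := ENNReal.toReal_mono ((measure_mono (fun p hp => hp.1)).trans_lt hEt.lt_top).ne hx
  rw [ENNReal.toReal_div, ENNReal.toReal_mul] at this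
  rw [measureReal_def, measureReal_def, measureReal_def, measureReal_def]
  refine le_trans (le_of_eq ?_) this
  ring

lemma greedy {d : ℕ} {E L U : Set (Fin d → ℝ)} (hE : MeasurableSet E) (hL : MeasurableSet L)
    (hUm : MeasurableSet U) (hEt : volume E ≠ ⊤) (hLt : volume L ≠ ⊤) (hUt : volume U ≠ ⊤)
    (hU0 : volume U ≠ 0) (hU : ∀ p ∈ E, ∀ l ∈ L, p - l ∈ U)
    (hq : volume.real L / volume.real U ≤ 1) (n : ℕ) :
    ∃ T : Finset (Fin d → ℝ), T.card ≤ n ∧ MeasurableSet {p | p ∈ E ∧ ∀ x ∈ T, p - x ∉ L} ∧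
      volume.real {p | p ∈ E ∧ ∀ x ∈ T, p - x ∉ L} ≤
        (1 - volume.real L / volume.real U) ^ n * volume.real E := by
  classical
  induction n with
  | zero => exact ⟨∅, by simp, by simpa using hE, by simp⟩
  | succ n ih =>
    obtain ⟨T, hT, hTm, hTv⟩ := ih
    set F := {p | p ∈ E ∧ ∀ x ∈ T, p - x ∉ L} with hF
    have hFE : F ⊆ E := fun p hp => hp.1
    have hFt : volume F ≠ ⊤ := ((measure_mono hFE).trans_lt hEt.lt_top).ne
    obtain ⟨x, hx⟩ := greedy_step hTm hL hUm hFt hLt hUt hU0 (fun p hp => hU p (hFE hp))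
    have hGm : MeasurableSet {p | p ∈ F ∧ p - x ∈ L} :=
      hTm.inter ((measurable_id.sub_const x) hL)
    have e : {p | p ∈ E ∧ ∀ y ∈ insert x T, p - y ∉ L} = F \ {p | p ∈ F ∧ p - x ∈ L} := by
      ext p
      simp only [hF, Finset.forall_mem_insert, mem_ofPred_eq, mem_diff]
      tauto
    refine ⟨insert x T, (Finset.card_insert_le _ _).trans (by omega), ?_, ?_⟩
    · rw [e]; exact hTm.diff hGm
    · rw [e, measureReal_diff (fun p hp => hp.1) hGm]
      · calc _ ≤ (1 - volume.real L / volume.real U) * volume.real F := by linarith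
          _ ≤ (1 - volume.real L / volume.real U) *
              ((1 - volume.real L / volume.real U) ^ n * volume.real E) := by
            apply mul_le_mul_of_nonneg_left hTv; linarith
          _ = _ := by ring

lemma packing {d : ℕ} {E L : Set (Fin d → ℝ)}
    (hL : IsCompact L) (hLv : 0 < volume.real L) (hEt : volume E ≠ ⊤) {η : ℝ} (hη : 0 < η) :
    ∃ Y : Finset (Fin d → ℝ), (Y.card : ℝ) ≤ volume.real E / (η ^ d * volume.real L) ∧
      ∀ x, (∀ l ∈ L, x - η • l ∈ E) → ∃ y ∈ Y, ∃ l ∈ L, ∃ l' ∈ L, x - η • l = y - η • l' := by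
  classical
  have hne : L.Nonempty := by
    rw [Set.nonempty_iff_ne_empty]; rintro rfl; simp at hLv
  obtain ⟨l0, hl0⟩ := hne
  let P : Finset (Fin d → ℝ) → Prop := fun Y => (∀ y ∈ Y, ∀ l ∈ L, y - η • l ∈ E) ∧
    ∀ y ∈ Y, ∀ z ∈ Y, y ≠ z → ∀ l ∈ L, ∀ l' ∈ L, y - η • l ≠ z - η • l'
  have hb : ∀ Y, P Y → (Y.card : ℝ) ≤ volume.real E / (η ^ d * volume.real L) := by
    intro Y hY
    have hηL : IsCompact (η • L) := hL.smul η
    let S : (Fin d → ℝ) → Set (Fin d → ℝ) := fun y => (fun p => y - p) ⁻¹' (η • L)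
    have hSm : ∀ y, MeasurableSet (S y) := fun y => (measurable_const.sub measurable_id) hηL.measurableSet
    have hS : ∀ y, volume.real (S y) = η ^ d * volume.real L := by
      intro y
      rw [← volr_smul hη.le, measureReal_def, measureReal_def]
      congr 1
      exact (Measure.measurePreserving_sub_left (volume : Measure (Fin d → ℝ)) y).measure_preimage
        hηL.measurableSet.nullMeasurableSet
    have hSt : ∀ y, volume (S y) ≠ ⊤ := by
      intro y h
      have := hS y
      rw [measureReal_def, h] at this
      have h2 : 0 < η ^ d * volume.real L := by positivity
      rw [← this] at h2
      simp at h2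
    have hSmem : ∀ y, ∀ p ∈ S y, ∃ l ∈ L, p = y - η • l := by
      rintro y p ⟨l, hl, h⟩
      exact ⟨l, hl, by simp only at h; rw [h]; abel⟩
    have hdis : (Y : Set (Fin d → ℝ)).PairwiseDisjoint S := by
      intro y hy z hz hyz
      rw [Function.onFun, Set.disjoint_left]
      intro p hp hq
      obtain ⟨l, hl, e1⟩ := hSmem y p hp
      obtain ⟨l', hl', e2⟩ := hSmem z p hq
      exact hY.2 y hy z hz hyz l hl l' hl' (e1.symm.trans e2)
    have hu := measureReal_biUnion_finset (μ := volume) hdis (fun y _ => hSm y) (fun y _ => hSt y)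
    rw [Finset.sum_congr rfl (fun y _ => hS y), Finset.sum_const, nsmul_eq_mul] at hu
    rw [le_div_iff₀ (by positivity), ← hu]
    refine measureReal_mono ?_ hEt
    intro p hp
    simp only [mem_iUnion] at hp
    obtain ⟨y, hy, hp⟩ := hp
    obtain ⟨l, hl, rfl⟩ := hSmem y p hp
    exact hY.1 y hy l hl
  let C : Set ℕ := {n | ∃ Y, P Y ∧ Y.card = n}
  have hC0 : C.Nonempty := ⟨0, ∅, by simp [P], by simp⟩
  have hCb : BddAbove C := by
    refine ⟨⌊volume.real E / (η ^ d * volume.real L)⌋₊, ?_⟩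
    rintro n ⟨Y, hY, rfl⟩
    exact Nat.le_floor (hb Y hY)
  obtain ⟨Y, hY, hYc⟩ := Nat.sSup_mem hC0 hCb
  refine ⟨Y, hb Y hY, ?_⟩
  intro x hx
  by_contra hcon
  push Not at hcon
  have hxY : x ∉ Y := fun h => hcon x h l0 hl0 l0 hl0 rfl
  have hP : P (insert x Y) := by
    refine ⟨?_, ?_⟩
    · intro y hy
      rcases Finset.mem_insert.1 hy with rfl | hy
      · exact hx
      · exact hY.1 y hy
    · intro y hy z hz hyz l hl l' hl'
      rcases Finset.mem_insert.1 hy with hy1 | hy <;> rcases Finset.mem_insert.1 hz with hz1 | hz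
      · exact absurd (hy1.trans hz1.symm) hyz
      · rw [hy1]; exact hcon z hz l hl l' hl'
      · rw [hz1]; exact (hcon y hy l' hl' l hl).symm
      · exact hY.2 y hy z hz hyz l hl l' hl'
  have := le_csSup hCb (show Y.card + 1 ∈ C from ⟨_, hP, Finset.card_insert_of_notMem hxY⟩)
  omega

lemma cover_count {d : ℕ} {K L : Set (Fin d → ℝ)} (hK : IsCompact K) (hKne : K.Nonempty)
    (hL : IsCompact L) (hLc : Convex ℝ L) (hLv : 0 < volume.real L) {η : ℝ} (hη : 0 < η)
    {c : Fin d → ℝ} (hc : ∀ x ∈ L, c - η • x ∈ L) (n : ℕ) :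
    volume.real L ≤ volume.real (K - (1 + η) • L) ∧
    ∃ T : Finset (Fin d → ℝ), (∀ p ∈ K, ∃ t ∈ T, p - t ∈ (1 + η) • L) ∧
      (T.card : ℝ) ≤ n + (1 - volume.real L / volume.real (K - (1 + η) • L)) ^ n *
        (volume.real (K - (1 + η) • L) / (η ^ d * volume.real L)) := by
  classical
  have hne : L.Nonempty := by
    rw [Set.nonempty_iff_ne_empty]; rintro rfl; simp at hLv
  obtain ⟨l0, hl0⟩ := hne
  obtain ⟨k0, hk0⟩ := hKne
  have hadd : ∀ l ∈ L, ∀ l' ∈ L, l + η • l' ∈ (1 + η) • L := by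
    intro l hl l' hl'
    rw [hLc.add_smul zero_le_one hη.le, one_smul]
    exact Set.add_mem_add hl (smul_mem_smul_set hl')
  set U := K - (1 + η) • L with hU
  have hUc : IsCompact U := isCompact_sub' hK (hL.smul _)
  set K' := K - η • L with hK'
  have hK'c : IsCompact K' := isCompact_sub' hK (hL.smul _)
  have hmem : ∀ p ∈ K', ∀ l ∈ L, p - l ∈ U := by
    rintro _ ⟨k, hk, _, ⟨l', hl', rfl⟩, rfl⟩ l hl
    exact ⟨k, hk, _, hadd l hl l' hl', by simp; abel⟩
  have hVL : volume.real L ≤ volume.real U := by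
    rw [measureReal_def, measureReal_def]
    refine ENNReal.toReal_mono hUc.measure_lt_top.ne ?_
    rw [← (Measure.measurePreserving_sub_left (volume : Measure (Fin d → ℝ))
      (k0 - η • l0)).measure_preimage hL.measurableSet.nullMeasurableSet]
    refine measure_mono fun p hp => ?_
    have := hmem (k0 - η • l0) ⟨k0, hk0, _, smul_mem_smul_set hl0, rfl⟩ _ hp
    simpa using this
  refine ⟨hVL, ?_⟩
  have hV : 0 < volume.real U := by linarith
  have hq : volume.real L / volume.real U ≤ 1 := (div_le_one hV).2 hVL
  have hK'U : volume.real K' ≤ volume.real U := by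
    rw [measureReal_def, measureReal_def]
    refine ENNReal.toReal_mono hUc.measure_lt_top.ne ?_
    rw [← measure_preimage_add_right volume (l0) K']
    refine measure_mono fun p hp => ?_
    have := hmem _ hp l0 hl0
    simpa using this
  obtain ⟨X, hX, hXm, hXv⟩ := greedy hK'c.measurableSet hL.measurableSet hUc.measurableSet
    hK'c.measure_lt_top.ne hL.measure_lt_top.ne hUc.measure_lt_top.ne
    (by intro h; simp [measureReal_def, h] at hV) hmem hq n
  set E := {p | p ∈ K' ∧ ∀ x ∈ X, p - x ∉ L} with hE
  obtain ⟨Y, hYc, hY⟩ := packing (E := E) hL hLv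
    ((measure_mono (fun p hp => hp.1)).trans_lt hK'c.measure_lt_top).ne hη
  refine ⟨X ∪ Y.image (fun y => y - c), ?_, ?_⟩
  · intro p hp
    by_cases h : ∀ l ∈ L, p - η • l ∈ E
    · obtain ⟨y, hy, l, hl, l', hl', e⟩ := hY p h
      refine ⟨y - c, Finset.mem_union_right _ (Finset.mem_image_of_mem _ hy), ?_⟩
      have e2 : p - (y - c) = (c - η • l') + η • l := by
        have : p = y - η • l' + η • l := by rw [← e]; abel
        rw [this]; abel
      rw [e2]
      exact hadd _ (hc l' hl') _ hl
    · push Not at h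
      obtain ⟨l, hl, hlE⟩ := h
      have : p - η • l ∈ K' := ⟨p, hp, _, smul_mem_smul_set hl, rfl⟩
      simp only [hE, mem_ofPred_eq, this, true_and] at hlE
      push Not at hlE
      obtain ⟨x, hx, hxl⟩ := hlE
      refine ⟨x, by simp [hx], ?_⟩
      have e2 : p - x = (p - η • l - x) + η • l := by abel
      rw [e2]
      exact hadd _ hxl _ hl
  · have h1 : ((X ∪ Y.image (fun y => y - c)).card : ℝ) ≤ X.card + Y.card := by
      exact_mod_cast (Finset.card_union_le _ _).trans (Nat.add_le_add_left Finset.card_image_le _)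
    have h2 : (X.card : ℝ) ≤ n := by exact_mod_cast hX
    have h3 : volume.real E / (η ^ d * volume.real L) ≤
        (1 - volume.real L / volume.real U) ^ n * (volume.real U / (η ^ d * volume.real L)) := by
      rw [← mul_div_assoc]
      gcongr
      refine hXv.trans ?_
      have : 0 ≤ 1 - volume.real L / volume.real U := by linarith
      gcongr
    linarith

lemma helly_neg {d : ℕ} (hd : d ≠ 0) {K : Set (Fin d → ℝ)} (hK : Convex ℝ K) (hc : IsCompact K)
    (hv : 0 < volume.real K) : ∃ c, ∀ x ∈ K, c - (1 / d : ℝ) • x ∈ K := by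
  classical
  have hinf : K.Infinite := by
    intro h
    have : Nonempty (Fin d) := ⟨⟨0, Nat.pos_of_ne_zero hd⟩⟩
    have := h.measure_zero (volume : Measure (Fin d → ℝ))
    simp [measureReal_def, this] at hv
  have : Infinite K := hinf.to_subtype
  have h3 : (d : ℝ) ≠ 0 := by exact_mod_cast hd
  let F : K → Set (Fin d → ℝ) := fun x => (fun k => k + (1 / d : ℝ) • (x : Fin d → ℝ)) '' K
  have := Convex.helly_theorem_compact (𝕜 := ℝ) (F := F) (by simp [ENat.card_eq_top_of_infinite])
    (fun x => by
      have := hK.translate ((1 / d : ℝ) • (x : Fin d → ℝ))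
      simpa [F, add_comm] using this)
    (fun x => hc.image (by fun_prop))
    (by
      intro I hI
      simp at hI
      refine ⟨∑ i ∈ I, (1 / d : ℝ) • (i : Fin d → ℝ), ?_⟩
      simp only [mem_iInter]
      intro j hj
      refine ⟨∑ i ∈ I.erase j, (1 / d : ℝ) • (i : Fin d → ℝ), ?_, Finset.sum_erase_add _ _ hj⟩
      refine hK.sum_mem (fun _ _ => by positivity) ?_ (fun i _ => i.2)
      rw [Finset.sum_const, Finset.card_erase_of_mem hj, hI]
      simp
      field_simp)
  obtain ⟨c, hc⟩ := this
  refine ⟨c, fun x hx => ?_⟩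
  obtain ⟨k, hk, e⟩ := mem_iInter.1 hc ⟨x, hx⟩
  simp only at e
  rw [← e]; simpa using hk

lemma numeric {d : ℕ} (hd : 2 ≤ d) : ∃ η : ℝ, 0 < η ∧ η ≤ 1 / d ∧
    (1 + η) ^ d * (2 + d * Real.log (1 / η)) ≤ d * (Real.log d + Real.log (Real.log d) + 5) := by
  rcases hd.eq_or_lt with rfl | hd
  · refine ⟨1 / 2, by norm_num, by norm_num, ?_⟩
    have h1 := Real.log_two_gt_d9
    have h2 := Real.log_two_lt_d9
    have h3 := Real.one_sub_inv_le_log_of_pos (x := Real.log 2) (by linarith)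
    have h4 : (Real.log 2)⁻¹ ≤ 3 / 2 := by
      rw [inv_le_comm₀ (by linarith) (by norm_num)]; norm_num; linarith
    norm_num
    linarith
  · have hd3 : (3 : ℝ) ≤ d := by exact_mod_cast hd
    have hl : 1 ≤ Real.log d := by
      rw [Real.le_log_iff_exp_le (by linarith)]
      linarith [Real.exp_one_lt_d9]
    set l := Real.log d with hldef
    have hm : Real.log l ≤ l - 1 := Real.log_le_sub_one_of_pos (by linarith)
    have hm0 : 0 ≤ Real.log l := Real.log_nonneg hl
    set m := Real.log l with hmdef
    refine ⟨1 / (d * l), by positivity, ?_, ?_⟩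
    · gcongr
      nlinarith
    · have hlog : Real.log (1 / (1 / (d * l))) = l + m := by
        rw [one_div_one_div, Real.log_mul (by positivity) (by positivity)]
      rw [hlog]
      set u := 1 / l with hu
      have hul : u * l = 1 := by rw [hu]; field_simp
      have hu0 : 0 < u := by positivity
      have hu1 : u ≤ 1 := by rw [hu, div_le_one (by linarith)]; exact hl
      have hp : (1 + 1 / (d * l)) ^ d ≤ 1 + u + u ^ 2 := by
        have e1 : 1 + 1 / (d * l) ≤ Real.exp (1 / (d * l)) := by
          have := Real.add_one_le_exp (1 / (d * l)); linarith
        have e2 : (1 + 1 / (d * l)) ^ d ≤ Real.exp u := by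
          refine (pow_le_pow_left₀ (by positivity) e1 d).trans_eq ?_
          rw [← Real.exp_nat_mul]
          congr 1
          rw [hu]; field_simp
        have e3 := Real.abs_exp_sub_one_sub_id_le (x := u) (by rw [abs_of_pos hu0]; exact hu1)
        have := (abs_le.1 e3).2
        linarith
      have hmu : m * u ≤ 1 - u := by nlinarith
      have hmu2 : 0 ≤ m * u := by positivity
      have h5 : (u + u ^ 2) * (l + m) ≤ (1 + u) * (2 - u) := by
        have : (u + u ^ 2) * (l + m) = (1 + u) * (u * l + m * u) := by ring
        rw [this, hul]
        gcongr
        linarith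
      have h6 : (1 + u + u ^ 2) * 2 ≤ d * 2 := by
        have : u ^ 2 ≤ 1 := by nlinarith
        linarith
      have h7 : d * ((u + u ^ 2) * (l + m)) ≤ d * 3 := by
        gcongr
        nlinarith [sq_nonneg (u - 1 / 2)]
      calc _ ≤ (1 + u + u ^ 2) * (2 + d * (l + m)) := by gcongr
        _ = (1 + u + u ^ 2) * 2 + d * (l + m) + d * ((u + u ^ 2) * (l + m)) := by ring
        _ ≤ d * (l + m + 5) := by linarith

lemma cover_body {d : ℕ} (hd : 2 ≤ d) {K : Set (Fin d → ℝ)} (hK : Convex ℝ K) (hc : IsCompact K)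
    (hv : 0 < volume.real K) {lam : ℝ} (h0 : 0 < lam) :
    ∃ T : Finset (Fin d → ℝ), (∀ p ∈ K, ∃ t ∈ T, p - t ∈ lam • K) ∧
      (T.card : ℝ) ≤ volume.real (K - lam • K) / (lam ^ d * volume.real K) *
        (d * (Real.log d + Real.log (Real.log d) + 5)) := by
  have hd0 : d ≠ 0 := by omega
  have hdR : (0 : ℝ) < d := by positivity
  obtain ⟨η, hη, hηd, hnum⟩ := numeric hd
  have hne : K.Nonempty := by
    rw [Set.nonempty_iff_ne_empty]; rintro rfl; simp at hv
  obtain ⟨k0, hk0⟩ := hne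
  set s := lam / (1 + η) with hs
  have hs0 : 0 < s := by positivity
  have hs1 : (1 + η) • (s • K) = lam • K := by
    rw [smul_smul]; congr 1; rw [hs]; field_simp
  have hsd : (1 + η) ^ d * s ^ d = lam ^ d := by
    rw [← mul_pow]; congr 1; rw [hs]; field_simp
  have hLv : volume.real (s • K) = s ^ d * volume.real K := volr_smul hs0.le K
  obtain ⟨c, hcK⟩ := helly_neg hd0 hK hc hv
  have hηd' : d * η ≤ 1 := by
    rw [le_div_iff₀ hdR] at hηd; linarith
  have hcL : ∀ x ∈ s • K, s • ((d * η) • c + (1 - d * η) • k0) - η • x ∈ s • K := by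
    rintro _ ⟨x, hx, rfl⟩
    refine ⟨(d * η) • (c - (1 / d : ℝ) • x) + (1 - d * η) • k0,
      hK (hcK x hx) hk0 (by positivity) (by linarith) (by ring), ?_⟩
    have : d * η * (1 / d) = η := by field_simp
    simp only [smul_sub, smul_add, smul_smul, this]
    rw [mul_comm η s]
    abel
  have cc := cover_count hc ⟨k0, hk0⟩ (hc.smul s) (hK.smul s) (by rw [hLv]; positivity) hη hcL
  rw [hs1] at cc
  set V := volume.real (K - lam • K) with hV
  set v := volume.real (s • K) with hvdef
  have hv0 : 0 < v := by rw [hLv]; positivity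
  have hvV : v ≤ V := (cc 0).1
  have hV0 : 0 < V := by linarith
  set q := v / V with hq
  have hq0 : 0 < q := by positivity
  have hq1 : q ≤ 1 := (div_le_one hV0).2 hvV
  have hlog : 0 ≤ Real.log (1 / η) := by
    apply Real.log_nonneg
    rw [le_div_iff₀ hη]
    have : (1 : ℝ) ≤ d := by exact_mod_cast (by omega : 1 ≤ d)
    nlinarith
  obtain ⟨T, hT, hTc⟩ := (cc ⌈V / v * (d * Real.log (1 / η))⌉₊).2
  refine ⟨T, hT, hTc.trans ?_⟩
  set n := ⌈V / v * (d * Real.log (1 / η))⌉₊ with hn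
  have hn1 : (n : ℝ) ≤ V / v * (d * Real.log (1 / η)) + 1 := (Nat.ceil_lt_add_one (by positivity)).le
  have hn2 : V / v * (d * Real.log (1 / η)) ≤ n := Nat.le_ceil _
  have hpow : (1 - q) ^ n ≤ η ^ d := by
    have e1 : 1 - q ≤ Real.exp (-q) := by
      have := Real.add_one_le_exp (-q); linarith
    refine (pow_le_pow_left₀ (by linarith) e1 n).trans ?_
    rw [← Real.exp_nat_mul, ← Real.le_log_iff_exp_le (by positivity), Real.log_pow]
    have e2 : Real.log (1 / η) = - Real.log η := by rw [one_div, Real.log_inv]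
    rw [e2] at hn2
    have e3 := mul_le_mul_of_nonneg_right hn2 hq0.le
    have e4 : V / v * (d * -Real.log η) * q = - (d * Real.log η) := by
      rw [hq]; field_simp
    rw [e4] at e3
    linarith
  have h1 : (1 - q) ^ n * (V / (η ^ d * v)) ≤ V / v := by
    calc _ ≤ η ^ d * (V / (η ^ d * v)) := by gcongr
      _ = V / v := by field_simp
  have h2 : 1 ≤ V / v := (one_le_div hv0).2 hvV
  calc (n : ℝ) + (1 - q) ^ n * (V / (η ^ d * v)) ≤ V / v * (2 + d * Real.log (1 / η)) := by linarith
    _ = V / (lam ^ d * volume.real K) * ((1 + η) ^ d * (2 + d * Real.log (1 / η))) := by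
      rw [hLv, ← hsd]; field_simp
    _ ≤ _ := by gcongr

lemma covers_of_finset {d : ℕ} {K : Set (Fin d → ℝ)} {lam : ℝ} {T : Finset (Fin d → ℝ)}
    (h : ∀ p ∈ K, ∃ t ∈ T, p - t ∈ lam • K) : CoversWith K lam T.card := by
  refine ⟨fun i => (T.equivFin.symm i : Fin d → ℝ), ?_⟩
  intro p hp
  obtain ⟨t, ht, x, hx, e⟩ := h p hp
  refine mem_iUnion.2 ⟨T.equivFin ⟨t, ht⟩, x, hx, ?_⟩
  simp only at e
  simp [e]

lemma covN_le {d : ℕ} (hd : 2 ≤ d) {K : Set (Fin d → ℝ)} (hK : Convex ℝ K) (hc : IsCompact K)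
    (hv : 0 < volume.real K) {lam : ℝ} (h0 : 0 < lam) :
    CoversWith K lam (covN lam K) ∧
      (covN lam K : ℝ) ≤ volume.real (K - lam • K) / (lam ^ d * volume.real K) *
        (d * (Real.log d + Real.log (Real.log d) + 5)) := by
  obtain ⟨T, hT, hTc⟩ := cover_body hd hK hc hv h0
  have h := covers_of_finset hT
  refine ⟨Nat.sInf_mem (s := {n : ℕ | CoversWith K lam n}) ⟨_, h⟩, le_trans ?_ hTc⟩
  exact_mod_cast Nat.sInf_le (s := {n : ℕ | CoversWith K lam n}) h

lemma wcoin_le {d : ℕ} {K : Set (Fin d → ℝ)} (hne : K.Nonempty) {lam : ℝ} (h0 : 0 < lam)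
    (h1 : lam < 1) {m : ℕ} (h : CoversWith K lam m) : wcoin K ≤ (m : ℝ) / (1 - lam) := by
  have hm : 0 < m := by
    rcases Nat.eq_zero_or_pos m with rfl | hm
    · obtain ⟨t, ht⟩ := h
      obtain ⟨k, hk⟩ := hne
      have := ht hk
      simp at this
    · exact hm
  have hg : gammaC m K ≤ lam := csInf_le ⟨0, fun x hx => hx.1.le⟩ ⟨h0, h⟩
  have hw : wcoin K ≤ (m : ℝ) / (1 - gammaC m K) := by
    refine csInf_le ⟨0, ?_⟩ ⟨m, hm, by linarith, rfl⟩
    rintro r ⟨j, hj, hj1, rfl⟩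
    exact div_nonneg (by positivity) (by linarith)
  refine hw.trans ?_
  have : 0 < 1 - lam := by linarith
  gcongr

/-- Rogers-type upper bounds on the weak covering index. -/
theorem wcoin_upper_bounds (d : ℕ) (hd : 2 ≤ d) (K : Set (Fin d → ℝ))
    (hK : IsConvexBody K) (lam : ℝ) (h0 : 0 < lam) (h1 : lam < 1) :
    wcoin K ≤ (covN lam K : ℝ) / (1 - lam) ∧
    (K = -K →
      (covN lam K : ℝ) / (1 - lam) ≤
        (1 + lam) ^ d / (lam ^ d * (1 - lam)) * d *
          (Real.log d + Real.log (Real.log d) + 5)) ∧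
    (covN lam K : ℝ) / (1 - lam) ≤
      1 / (lam ^ d * (1 - lam)) *
        (((Nat.choose (2 * d) d : ℝ) ^ ((1 : ℝ) / d) - 1 + lam) ^ d) * d *
          (Real.log d + Real.log (Real.log d) + 5) := by
  obtain ⟨hc, hconv, hint⟩ := hK
  have hne : K.Nonempty := hint.mono interior_subset
  have hv : 0 < volume.real K := by
    rw [MeasureTheory.measureReal_def]
    refine ENNReal.toReal_pos ?_ hc.measure_lt_top.ne
    exact (MeasureTheory.Measure.measure_pos_of_nonempty_interior _ hint).ne'
  have hd0 : d ≠ 0 := by omega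
  obtain ⟨hcov, hN⟩ := covN_le hd hconv hc hv h0
  have h1' : 0 < 1 - lam := by linarith
  have hΛ : 0 ≤ (d : ℝ) * (Real.log d + Real.log (Real.log d) + 5) := by
    obtain ⟨η, hη, hηd, hnum⟩ := numeric hd
    refine le_trans ?_ hnum
    have hdR : (1 : ℝ) ≤ d := by exact_mod_cast (by omega : 1 ≤ d)
    have : 0 ≤ Real.log (1 / η) := by
      apply Real.log_nonneg
      rw [le_div_iff₀ hη]
      rw [le_div_iff₀ (by linarith)] at hηd
      nlinarith
    positivity
  have main : ∀ M : ℝ, volume.real (K - lam • K) ≤ M * volume.real K →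
      (covN lam K : ℝ) / (1 - lam) ≤ 1 / (lam ^ d * (1 - lam)) * M * d *
          (Real.log d + Real.log (Real.log d) + 5) := by
    intro M hM
    rw [div_le_iff₀ h1']
    refine hN.trans ?_
    calc _ ≤ M * volume.real K / (lam ^ d * volume.real K) *
          (d * (Real.log d + Real.log (Real.log d) + 5)) := by gcongr
      _ = _ := by field_simp
  refine ⟨wcoin_le hne h0 h1 hcov, ?_, main _ (vol_diff_le hd0 hconv hc hv h0 h1)⟩
  intro hsym
  have e : K - lam • K = (1 + lam) • K := by
    rw [hconv.add_smul zero_le_one h0.le, one_smul, sub_eq_add_neg, ← smul_set_neg, ← hsym]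
  have := main ((1 + lam) ^ d) (by rw [e, volr_smul (by linarith)])
  refine this.trans_eq ?_
  ring
end
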